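/- arXiv:2206.12182 — 2 statements merged into one kernel-verified Lean document; each statement's English description precedes it below -/
import Mathlib

section
/- Let Γ be a finite simple graph, let (G_v) be a family of nontrivial groups indexed by the vertices of Γ, and let 𝒢 = 𝒢(Γ, {G_v}) be the associated graph product. Let N be a finitely generated full normal subgroup of 𝒢. Assume that for every central vertex v of Γ, every proper quotient of G_v (i.e., the quotient of G_v by any nontrivial normal subgroup) is both abelian-by-finite and finite-by-abelian. Then 𝒢/N is both abelian-by-finite and finite-by-abelian. -/
/-- The set of defining relators of the graph product: commutators of elements of
vertex groups attached to adjacent vertices. -/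
def graphProductRels {V : Type} (Γ : SimpleGraph V) (G : V → Type)
    [∀ v, Group (G v)] : Subgroup (Monoid.CoprodI G) :=
  Subgroup.normalClosure
    { x | ∃ (v w : V) (g : G v) (h : G w), Γ.Adj v w ∧
        x = Monoid.CoprodI.of g * Monoid.CoprodI.of h *
              (Monoid.CoprodI.of g)⁻¹ * (Monoid.CoprodI.of h)⁻¹ }

instance graphProductRels.normal {V : Type} (Γ : SimpleGraph V) (G : V → Type)
    [∀ v, Group (G v)] : (graphProductRels Γ G).Normal :=
  Subgroup.normalClosure_normal

/-- The graph product of the groups `G v` over the simple graph `Γ`. -/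
abbrev GraphProduct {V : Type} (Γ : SimpleGraph V) (G : V → Type)
    [∀ v, Group (G v)] : Type :=
  Monoid.CoprodI G ⧸ graphProductRels Γ G

/-- The subgroup `𝒢(Δ)` of the graph product generated by the images of the vertex
groups attached to the vertices in the set `S`. -/
def vertexSubgroup {V : Type} (Γ : SimpleGraph V) (G : V → Type)
    [∀ v, Group (G v)] (S : Set V) : Subgroup (GraphProduct Γ G) :=
  Subgroup.closure
    { x | ∃ v ∈ S, ∃ g : G v,
        x = (QuotientGroup.mk (Monoid.CoprodI.of g) : GraphProduct Γ G) }

/-- A set of vertices `S` is a join of two (nonempty) subgraphs if it can be split into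
two nonempty pieces every two vertices of which (one from each piece) are adjacent. -/
def IsJoinOfTwo {V : Type} (Γ : SimpleGraph V) (S : Set V) : Prop :=
  ∃ A B : Set V, A.Nonempty ∧ B.Nonempty ∧ Disjoint A B ∧ A ∪ B = S ∧
    ∀ a ∈ A, ∀ b ∈ B, Γ.Adj a b

/-- `P : Fin k → Set V` is a join decomposition of `Γ` into join-indecomposable pieces:
the pieces are nonempty, partition the vertices, any two vertices in distinct pieces are
adjacent, and no piece is itself a join of two nonempty subgraphs. -/
def IsJoinDecomposition {V : Type} (Γ : SimpleGraph V) {k : ℕ} (P : Fin k → Set V) : Prop :=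
  (∀ i, (P i).Nonempty) ∧ (∀ v : V, ∃! i, v ∈ P i) ∧
    (∀ i j, i ≠ j → ∀ a ∈ P i, ∀ b ∈ P j, Γ.Adj a b) ∧
    (∀ i, ¬ IsJoinOfTwo Γ (P i))

/-- A subgroup `N` of the graph product is full if for a join decomposition of `Γ` into
join-indecomposable pieces `Γ_1, …, Γ_k`, `N` intersects each `𝒢(Γ_i)` nontrivially. -/
def IsFullSubgroup {V : Type} (Γ : SimpleGraph V) (G : V → Type)
    [∀ v, Group (G v)] (N : Subgroup (GraphProduct Γ G)) : Prop :=
  ∀ (k : ℕ) (P : Fin k → Set V), IsJoinDecomposition Γ P →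
    ∀ i, N ⊓ vertexSubgroup Γ G (P i) ≠ ⊥

/-- A vertex is central if it is adjacent to every other vertex. -/
def IsCentralVertex {V : Type} (Γ : SimpleGraph V) (v : V) : Prop :=
  ∀ w : V, w ≠ v → Γ.Adj v w

/-- A group is abelian-by-finite if it has an abelian normal subgroup of finite index. -/
def AbelianByFinite (Q : Type) [Group Q] : Prop :=
  ∃ A : Subgroup Q, A.Normal ∧ A.FiniteIndex ∧ ∀ x y : A, x * y = y * x

/-- A group is finite-by-abelian if it has a finite normal subgroup with abelian quotient,
equivalently a finite normal subgroup containing all commutators. -/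
def FiniteByAbelian (Q : Type) [Group Q] : Prop :=
  ∃ F : Subgroup Q, F.Normal ∧ Finite F ∧ ∀ x y : Q, x * y * x⁻¹ * y⁻¹ ∈ F

/-!
A group is both abelian-by-finite and finite-by-abelian exactly when its centre has finite index.
Since `𝒢/N` is generated by the finitely many images of the vertex groups, it is enough that the
centralizer of each of these images has finite index.

If `v` is not central, `𝒢` splits as `𝒢(star v) *_{𝒢(lk v)} 𝒢(Γ ∖ v)`. The signed path from a base
vertex of the Bass–Serre tree to its translate by `x` is a cocycle `x ↦ δ x` with values in the
finitely supported functions on the edges `𝒢/𝒢(lk v)`. A normal subgroup `N` whose paths all avoid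
some edge acts trivially on the tree, that is `N ≤ 𝒢(lk v)`, and fullness excludes this. Hence every
edge lies on the path of some element of `N`, so that finite generation of `N` leaves only finitely
many `N`-orbits of edges: `N 𝒢(lk v)` has finite index. Since `𝒢(lk v)` centralizes `G v`, the
centralizer of the image of `G v` in `𝒢/N` has finite index.

If `v` is central, `{v}` is a join factor, so `N` meets `G v` nontrivially and the image of `G v` in
`𝒢/N` is a proper quotient of `G v`. By hypothesis its centre has finite index, and `𝒢/N` is the
product of this image and its centralizer.
-/

/-! ### Groups whose centre has finite index -/

section FiniteIndex

open scoped commutatorElement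

variable {Q : Type*} [Group Q]

lemma finiteIndex_center_of_iSup_eq_top {ι : Type*} [Finite ι] {R : ι → Subgroup Q}
    (hR : ⨆ i, R i = ⊤) (h : ∀ i, (Subgroup.centralizer (R i : Set Q)).FiniteIndex) :
    (Subgroup.center Q).FiniteIndex := by
  have := Subgroup.finiteIndex_iInf h
  refine Subgroup.finiteIndex_of_le (H := ⨅ i, Subgroup.centralizer (R i : Set Q)) fun z hz => ?_
  have hle : ⨆ i, R i ≤ Subgroup.centralizer {z} := iSup_le fun i r hr =>
    Subgroup.mem_centralizer_singleton_iff.mpr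
      (Subgroup.mem_centralizer_iff.mp (Subgroup.mem_iInf.mp hz i) r hr)
  exact Subgroup.mem_center_iff.mpr fun g =>
    Subgroup.mem_centralizer_singleton_iff.mp (hle (hR ▸ Subgroup.mem_top g))

lemma finiteIndex_centralizer_of_sup_eq_top {R : Subgroup Q}
    (hR : R ⊔ Subgroup.centralizer (R : Set Q) = ⊤) [(Subgroup.center R).FiniteIndex] :
    (Subgroup.centralizer (R : Set Q)).FiniteIndex := by
  have : R.Normal := Subgroup.normalizer_eq_top_iff.mp <| top_le_iff.mp <|
    hR ▸ sup_le Subgroup.le_normalizer (Subgroup.centralizer_le_normalizer _)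
  have hcenter : (Subgroup.centralizer (R : Set Q)).subgroupOf R = Subgroup.center R := by
    ext x
    simp [Subgroup.mem_subgroupOf, Subgroup.mem_centralizer_iff, Subgroup.mem_center_iff,
      Subtype.ext_iff]
  refine ⟨?_⟩
  rw [← Subgroup.relIndex_top_right, ← hR, Subgroup.relIndex_sup_right, Subgroup.relIndex, hcenter]
  exact Subgroup.FiniteIndex.index_ne_zero

lemma finite_commutatorSet_of_finiteIndex_center [(Subgroup.center Q).FiniteIndex] :
    Finite (commutatorSet Q) := by
  have hmul (x y : Q) (z w : Subgroup.center Q) : ⁅x * z, y * w⁆ = ⁅x, y⁆ := by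
    have hz : ⁅(z : Q), y * w⁆ = 1 := commutatorElement_eq_one_iff_mul_comm.mpr
      (Subgroup.mem_center_iff.mp z.2 _).symm
    have hw : ⁅x, (w : Q)⁆ = 1 := commutatorElement_eq_one_iff_mul_comm.mpr
      (Subgroup.mem_center_iff.mp w.2 _)
    simp [commutatorElement_mul_left_eq_conj_mul, commutatorElement_mul_right_eq_mul_conj x, hz, hw]
  refine (Set.finite_range fun p : (Q ⧸ Subgroup.center Q) × (Q ⧸ Subgroup.center Q) =>
    ⁅p.1.out, p.2.out⁆).subset ?_
  rintro _ ⟨x, y, rfl⟩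
  obtain ⟨z, hz⟩ := QuotientGroup.mk_out_eq_mul (Subgroup.center Q) x
  obtain ⟨w, hw⟩ := QuotientGroup.mk_out_eq_mul (Subgroup.center Q) y
  exact ⟨(x, y), by simp only [hz, hw, hmul]⟩

lemma finiteIndex_centralizer_zpowers [Finite (commutatorSet Q)] (g : Q) :
    (Subgroup.centralizer (Subgroup.zpowers g : Set Q)).FiniteIndex := by
  have : Finite (Q ⧸ Subgroup.centralizer {g}) :=
    Finite.of_injective _ (Subgroup.quotientCentralizerEmbedding g).injective
  rw [Subgroup.zpowers_eq_closure, Subgroup.centralizer_closure]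
  exact Subgroup.finiteIndex_of_finite_quotient

end FiniteIndex

theorem abelianByFinite_and_finiteByAbelian_iff {Q : Type} [Group Q] :
    AbelianByFinite Q ∧ FiniteByAbelian Q ↔ (Subgroup.center Q).FiniteIndex := by
  constructor
  · rintro ⟨⟨A, -, hA, hcomm⟩, F, -, hF, hcommF⟩
    have : Finite (commutatorSet Q) :=
      Finite.Set.subset (F : Set Q) (by rintro _ ⟨x, y, rfl⟩; exact hcommF x y)
    let R (i : Option (Q ⧸ A)) : Subgroup Q := i.elim A fun c => Subgroup.zpowers c.out
    refine finiteIndex_center_of_iSup_eq_top (R := R) (eq_top_iff.mpr fun x _ => ?_) ?_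
    · obtain ⟨a, ha⟩ := QuotientGroup.mk_out_eq_mul A x
      rw [eq_mul_inv_of_mul_eq ha.symm]
      exact mul_mem (le_iSup R (some x) (Subgroup.mem_zpowers _))
        (inv_mem (le_iSup R none a.2))
    · rintro (_ | c)
      · exact Subgroup.finiteIndex_of_le (H := A) fun a ha => Subgroup.mem_centralizer_iff.mpr
          fun b hb => congrArg Subtype.val (hcomm ⟨b, hb⟩ ⟨a, ha⟩)
      · exact finiteIndex_centralizer_zpowers _
  · intro h
    have := finite_commutatorSet_of_finiteIndex_center (Q := Q)
    exact ⟨⟨Subgroup.center Q, inferInstance, h, fun x y => mul_comm' x y⟩,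
      commutator Q, inferInstance, inferInstance, fun x y =>
        Subgroup.commutator_mem_commutator (Subgroup.mem_top x) (Subgroup.mem_top y)⟩

/-! ### Actions of groups on sets and cocycles -/

section Orbits

variable {P : Type*} [Group P]

lemma finiteIndex_sup_of_forall_exists_smul_mem {N C : Subgroup P} [N.Normal] {Z : Set (P ⧸ C)}
    (hZ : Z.Finite) (h : ∀ z : P ⧸ C, ∃ n ∈ N, n • z ∈ Z) : (N ⊔ C).FiniteIndex := by
  have := hZ.to_subtype
  have hsurj : Function.Surjective
      fun z : Z => Subgroup.quotientMapOfLE (le_sup_right : C ≤ N ⊔ C) z := by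
    rintro ⟨x⟩
    obtain ⟨n, hn, hz⟩ := h x
    refine ⟨⟨_, hz⟩, (QuotientGroup.eq (s := N ⊔ C) (a := n * x)).mpr (le_sup_left (a := N) ?_)⟩
    simpa [mul_assoc] using ‹N.Normal›.conj_mem _ (inv_mem hn) x⁻¹
  have := Finite.of_surjective _ hsurj
  exact Subgroup.finiteIndex_of_finite_quotient

open scoped Pointwise in
lemma smul_eq_self_of_subset_smul {X : Type*} [MulAction P X] {L : Set X}
    (hL : (MulAction.orbit P L).Finite) {g : P} (h : L ⊆ g • L) : g • L = L := by
  have hmono (k : ℕ) : L ⊆ g ^ k • L := by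
    induction k with
    | zero => simp
    | succ k ih =>
      rw [pow_succ', mul_smul]
      exact h.trans (Set.smul_set_mono ih)
  have : Finite (MulAction.orbit P L) := hL
  have : Finite (P ⧸ MulAction.stabilizer P L) :=
    Finite.of_equiv _ (MulAction.orbitEquivQuotientStabilizer P L)
  obtain ⟨k, hk, -, hgk⟩ := Subgroup.exists_pow_mem_of_index_ne_zero
    (Subgroup.finiteIndex_of_finite_quotient (H := MulAction.stabilizer P L)).index_ne_zero g
  refine subset_antisymm ?_ h
  calc g • L ⊆ g • g ^ (k - 1) • L := Set.smul_set_mono (hmono _)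
    _ = L := by rw [← mul_smul, mul_pow_sub_one hk.ne', hgk]

attribute [local instance] Finsupp.comapSMul Finsupp.comapMulAction Finsupp.comapDistribMulAction

lemma exists_finite_forall_exists_smul_mem_of_fg {Y M : Type*} [MulAction P Y] [AddCommGroup M]
    {δ : P → Y →₀ M} (hδ : ∀ x y, δ (x * y) = δ x + x • δ y) {N : Subgroup P} (hN : N.FG) :
    ∃ Z : Set Y, Z.Finite ∧ ∀ n ∈ N, ∀ z, δ n z ≠ 0 → ∃ m ∈ N, m • z ∈ Z := by
  obtain ⟨T, rfl⟩ := hN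
  refine ⟨⋃ t ∈ (T : Set P), (δ t).support, T.finite_toSet.biUnion fun t _ => Finset.finite_toSet _,
    fun n hn => ?_⟩
  have hone : δ 1 = 0 := by simpa using hδ 1 1
  induction hn using Subgroup.closure_induction with
  | mem t ht =>
    exact fun z hz => ⟨1, one_mem _, by
      simpa only [one_smul] using Set.mem_biUnion ht (Finsupp.mem_support_iff.mpr hz)⟩
  | one => exact fun z hz => absurd (by rw [hone, Finsupp.zero_apply]) hz
  | mul x y hx _ ihx ihy =>
    intro z hz
    rw [hδ, Finsupp.add_apply, Finsupp.comapSMul_apply] at hz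
    by_cases hzx : δ x z = 0
    · obtain ⟨m, hm, hmz⟩ := ihy (x⁻¹ • z) fun hzy => hz (by rw [hzx, hzy, add_zero])
      exact ⟨m * x⁻¹, mul_mem hm (inv_mem hx), by rwa [mul_smul]⟩
    · exact ihx z hzx
  | inv x hx ih =>
    intro z hz
    have hinv : δ x (x • z) + δ x⁻¹ z = 0 := by
      simpa [hone] using (DFunLike.congr_fun (hδ x x⁻¹) (x • z)).symm
    obtain ⟨m, hm, hmz⟩ := ih (x • z) fun hzx => hz (by rwa [hzx, zero_add] at hinv)
    exact ⟨m * x, mul_mem hm hx, by rwa [mul_smul]⟩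

end Orbits

/-! ### Graph products and their vertex subgroups -/

namespace GraphProduct

variable {V : Type} (Γ : SimpleGraph V) {G : V → Type} [∀ v, Group (G v)]

/-- The canonical homomorphism from a vertex group to the graph product. -/
def of (v : V) : G v →* GraphProduct Γ G :=
  (QuotientGroup.mk' (graphProductRels Γ G)).comp Monoid.CoprodI.of

variable {Γ}

lemma commute_of {v w : V} (h : Γ.Adj v w) (g : G v) (k : G w) :
    Commute (of Γ v g) (of Γ w k) := by
  have hrel := (QuotientGroup.eq_one_iff (N := graphProductRels Γ G) _).mpr
    (Subgroup.subset_normalClosure ⟨v, w, g, k, h, rfl⟩)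
  exact mul_inv_eq_iff_eq_mul.mp (mul_inv_eq_one.mp hrel)

/-- The universal property of graph products: homomorphisms out of the vertex groups whose
images commute along the edges of `Γ` extend to the graph product. -/
def lift {M : Type*} [Group M] (f : ∀ v, G v →* M)
    (hf : ∀ ⦃v w⦄, Γ.Adj v w → ∀ g k, Commute (f v g) (f w k)) : GraphProduct Γ G →* M :=
  QuotientGroup.lift (graphProductRels Γ G) (Monoid.CoprodI.lift f) <|
    Subgroup.normalClosure_le_normal (N := (Monoid.CoprodI.lift f).ker) <| by
      rintro _ ⟨v, w, g, k, h, rfl⟩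
      simp [(hf h g k).eq]

@[simp]
lemma lift_of {M : Type*} [Group M] (f : ∀ v, G v →* M)
    (hf : ∀ ⦃v w⦄, Γ.Adj v w → ∀ g k, Commute (f v g) (f w k)) (v : V) (g : G v) :
    lift f hf (of Γ v g) = f v g :=
  Monoid.CoprodI.lift_of f g

lemma induction_on_right {p : GraphProduct Γ G → Prop} (x : GraphProduct Γ G) (one : p 1)
    (mul_of : ∀ x v g, p x → p (x * of Γ v g)) : p x := by
  suffices h : ∀ y : Monoid.CoprodI G, p (QuotientGroup.mk y)⁻¹ by
    obtain ⟨y, hy⟩ := QuotientGroup.mk_surjective x⁻¹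
    simpa only [hy, inv_inv] using h y
  intro y
  induction y using Monoid.CoprodI.induction_left with
  | one => simpa using one
  | mul g y ih => simpa [of] using mul_of _ _ g⁻¹ ih

lemma of_mem_vertexSubgroup {S : Set V} {v : V} (hv : v ∈ S) (g : G v) :
    of Γ v g ∈ vertexSubgroup Γ G S :=
  Subgroup.subset_closure ⟨v, hv, g, rfl⟩

lemma vertexSubgroup_le {S : Set V} {H : Subgroup (GraphProduct Γ G)} :
    vertexSubgroup Γ G S ≤ H ↔ ∀ v ∈ S, ∀ g, of Γ v g ∈ H := by
  refine (Subgroup.closure_le H).trans ⟨fun h v hv g => h ⟨v, hv, g, rfl⟩, ?_⟩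
  rintro h _ ⟨v, hv, g, rfl⟩
  exact h v hv g

lemma vertexSubgroup_mono {S T : Set V} (h : S ⊆ T) :
    vertexSubgroup Γ G S ≤ vertexSubgroup Γ G T :=
  vertexSubgroup_le.mpr fun _ hv => of_mem_vertexSubgroup (h hv)

lemma vertexSubgroup_empty : vertexSubgroup Γ G ∅ = ⊥ :=
  le_bot_iff.mp (vertexSubgroup_le.mpr fun _ => False.elim)

lemma vertexSubgroup_univ : vertexSubgroup Γ G Set.univ = ⊤ :=
  eq_top_iff.mpr fun x _ => induction_on_right x (one_mem _) fun _ v g hx =>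
    mul_mem hx (of_mem_vertexSubgroup (Set.mem_univ v) g)

lemma vertexSubgroup_singleton (v : V) : vertexSubgroup Γ G {v} = (of Γ v).range :=
  le_antisymm (vertexSubgroup_le.mpr (by rintro _ rfl g; exact ⟨g, rfl⟩))
    (by rintro _ ⟨g, rfl⟩; exact of_mem_vertexSubgroup (Set.mem_singleton v) g)

lemma iSup_range_of : ⨆ v, (of Γ v : G v →* GraphProduct Γ G).range = ⊤ :=
  top_le_iff.mp <| vertexSubgroup_univ.symm.trans_le <| vertexSubgroup_le.mpr fun v _ g =>
    le_iSup (fun v => (of Γ v : G v →* GraphProduct Γ G).range) v ⟨g, rfl⟩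

open scoped Classical in
variable (Γ G) in
/-- The canonical homomorphism from the graph product onto the direct product of the vertex
groups. -/
noncomputable def toPi : GraphProduct Γ G →* ∀ v, G v :=
  lift (MonoidHom.mulSingle G) fun _ _ h _ _ => Pi.mulSingle_commute h.ne _ _

open scoped Classical in
lemma toPi_of (v : V) (g : G v) : toPi Γ G (of Γ v g) = Pi.mulSingle v g :=
  lift_of _ _ v g

lemma of_injective (v : V) : Function.Injective (of Γ v : G v →* GraphProduct Γ G) := by
  classical
  intro g k h
  have hpi := congrArg (toPi Γ G) h
  rw [toPi_of, toPi_of] at hpi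
  exact Pi.mulSingle_injective v hpi

open scoped Classical in
variable (Γ G) in
/-- The retraction of the graph product onto `vertexSubgroup Γ G S` that kills the vertex groups
outside `S`. -/
noncomputable def retraction (S : Set V) : GraphProduct Γ G →* GraphProduct Γ G :=
  lift (fun v => if v ∈ S then of Γ v else 1) fun v w h g k => by
    split_ifs <;> simp [commute_of h]

lemma retraction_of_mem {S : Set V} {v : V} (hv : v ∈ S) (g : G v) :
    retraction Γ G S (of Γ v g) = of Γ v g := by
  simp [retraction, hv]

lemma retraction_of_notMem {S : Set V} {v : V} (hv : v ∉ S) (g : G v) :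
    retraction Γ G S (of Γ v g) = 1 := by
  simp [retraction, hv]

lemma retraction_eq_self {S : Set V} {x : GraphProduct Γ G} (hx : x ∈ vertexSubgroup Γ G S) :
    retraction Γ G S x = x :=
  vertexSubgroup_le (H := (retraction Γ G S).eqLocus (MonoidHom.id _)).mpr
    (fun _ hv => retraction_of_mem hv) hx

lemma of_notMem_vertexSubgroup {S : Set V} {v : V} (hv : v ∉ S) {g : G v} (hg : g ≠ 1) :
    of Γ v g ∉ vertexSubgroup Γ G S := fun hmem =>
  hg <| of_injective v <| by rw [← retraction_eq_self hmem, retraction_of_notMem hv, map_one]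

lemma vertexSubgroup_inf (S T : Set V) :
    vertexSubgroup Γ G S ⊓ vertexSubgroup Γ G T = vertexSubgroup Γ G (S ∩ T) := by
  refine le_antisymm ?_ (le_inf (vertexSubgroup_mono Set.inter_subset_left)
    (vertexSubgroup_mono Set.inter_subset_right))
  rintro x ⟨hS, hT⟩
  have hmap : vertexSubgroup Γ G T ≤ (vertexSubgroup Γ G (S ∩ T)).comap (retraction Γ G S) := by
    refine vertexSubgroup_le.mpr fun v hv g => Subgroup.mem_comap.mpr ?_
    by_cases hvS : v ∈ S
    · rw [retraction_of_mem hvS]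
      exact of_mem_vertexSubgroup (Set.mem_inter hvS hv) g
    · rw [retraction_of_notMem hvS]
      exact one_mem _
  simpa only [Subgroup.mem_comap, retraction_eq_self hS] using hmap hT

lemma mem_vertexSubgroup_compl {S : Set V} (hS : S.Finite) {x : GraphProduct Γ G}
    (h : ∀ v ∈ S, x ∈ vertexSubgroup Γ G {v}ᶜ) : x ∈ vertexSubgroup Γ G Sᶜ := by
  induction S, hS using Set.Finite.induction_on with
  | empty => simp [vertexSubgroup_univ]
  | insert _ _ ih =>
    rw [← Set.singleton_union, Set.compl_union, ← vertexSubgroup_inf]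
    exact ⟨h _ (Set.mem_insert _ _), ih fun v hv => h v (Set.mem_insert_of_mem _ hv)⟩

variable (Γ G) in
/-- The subgroup `𝒢(lk v)` generated by the vertex groups adjacent to `v`. It is the stabilizer of
an edge of the Bass–Serre tree of the splitting `𝒢 = 𝒢(star v) *_{𝒢(lk v)} 𝒢(Γ ∖ v)`. -/
abbrev linkSubgroup (v : V) : Subgroup (GraphProduct Γ G) :=
  vertexSubgroup Γ G (Γ.neighborSet v)

lemma linkSubgroup_le_centralizer (v : V) :
    linkSubgroup Γ G v ≤ Subgroup.centralizer (Set.range (of Γ v)) := by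
  refine vertexSubgroup_le.mpr fun w hw k => Subgroup.mem_centralizer_iff.mpr ?_
  rintro _ ⟨g, rfl⟩
  exact commute_of hw g k

lemma linkSubgroup_le_vertexSubgroup_compl {u v : V} (h : ¬ Γ.Adj v u) :
    linkSubgroup Γ G v ≤ vertexSubgroup Γ G {u}ᶜ :=
  vertexSubgroup_mono fun w hw => by rintro rfl; exact h hw

/-! ### Paths in the Bass–Serre tree -/

/-- The homomorphism that agrees with `φ` on the vertex groups other than `G v` and with the
conjugate of `φ` by `t` on `G v`. -/
noncomputable def partialConj {M : Type*} [Group M] (φ : GraphProduct Γ G →* M) (v : V) (t : M)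
    (ht : ∀ ⦃w⦄, Γ.Adj v w → ∀ k, Commute t (φ (of Γ w k))) : GraphProduct Γ G →* M :=
  open scoped Classical in
  lift (fun w => if w = v then (MulAut.conj t).toMonoidHom.comp (φ.comp (of Γ w))
      else φ.comp (of Γ w)) fun w u h g k => by
    have hfix {w : V} (hw : Γ.Adj v w) (k : G w) :
        MulAut.conj t (φ (of Γ w k)) = φ (of Γ w k) := by
      rw [MulAut.conj_apply, (ht hw k).eq, mul_inv_cancel_right]
    have hcomm := (commute_of h g k).map φ
    rcases eq_or_ne w v with rfl | hw
    · simpa [h.ne', hfix h] using hcomm.map (MulAut.conj t)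
    · rcases eq_or_ne u v with rfl | hu
      · simpa [h.ne, hfix h.symm] using hcomm.map (MulAut.conj t)
      · simpa [hw, hu] using hcomm

section PartialConj

variable {M : Type*} [Group M] {φ : GraphProduct Γ G →* M} {v : V} {t : M}
  {ht : ∀ ⦃w⦄, Γ.Adj v w → ∀ k, Commute t (φ (of Γ w k))}

lemma partialConj_of_self (g : G v) :
    partialConj φ v t ht (of Γ v g) = t * φ (of Γ v g) * t⁻¹ := by
  simp [partialConj]

lemma partialConj_of_ne {w : V} (hw : w ≠ v) (k : G w) :
    partialConj φ v t ht (of Γ w k) = φ (of Γ w k) := by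
  simp [partialConj, hw]

end PartialConj

variable (Γ G) in
/-- The edges of the Bass–Serre tree of the splitting `𝒢 = 𝒢(star v) *_{𝒢(lk v)} 𝒢(Γ ∖ v)`. -/
abbrev Edge (v : V) : Type :=
  GraphProduct Γ G ⧸ linkSubgroup Γ G v

section EdgePath

attribute [local instance] Finsupp.comapSMul Finsupp.comapMulAction Finsupp.comapDistribMulAction

lemma commute_addRight_toPerm {v : V} {c : GraphProduct Γ G} (hc : c ∈ linkSubgroup Γ G v) :
    Commute (Equiv.addRight (Finsupp.single (QuotientGroup.mk 1 : Edge Γ G v) (1 : ℤ)))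
      (MulAction.toPermHom (GraphProduct Γ G) (Edge Γ G v →₀ ℤ) c) := by
  have hfix : c • (QuotientGroup.mk 1 : Edge Γ G v) = QuotientGroup.mk 1 :=
    QuotientGroup.eq.mpr (by simpa using hc)
  ext1 f
  simp [smul_add, hfix]

variable (Γ G) in
/-- The affine action of the graph product on the integral 1-chains of the Bass–Serre tree whose
linear part permutes the edges, normalised so that `G v` fixes the base edge and the other vertex
groups fix `0`. -/
noncomputable def edgePathHom (v : V) : GraphProduct Γ G →* Equiv.Perm (Edge Γ G v →₀ ℤ) :=
  partialConj (MulAction.toPermHom (GraphProduct Γ G) (Edge Γ G v →₀ ℤ)) v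
    (Equiv.addRight (Finsupp.single (QuotientGroup.mk 1) 1)) fun _ hw k =>
      commute_addRight_toPerm (of_mem_vertexSubgroup hw k)

variable (Γ G) in
/-- The signed path in the Bass–Serre tree from the vertex `𝒢(Γ ∖ v)` to its translate by `x`,
as a 1-chain. -/
noncomputable def edgePath (v : V) (x : GraphProduct Γ G) : Edge Γ G v →₀ ℤ :=
  edgePathHom Γ G v x 0

variable {v : V}

lemma edgePathHom_apply (x : GraphProduct Γ G) (f : Edge Γ G v →₀ ℤ) :
    edgePathHom Γ G v x f = x • f + edgePath Γ G v x := by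
  induction x using induction_on_right generalizing f with
  | one => simp [edgePath]
  | mul_of x w k ih =>
    have hof (f : Edge Γ G v →₀ ℤ) : edgePathHom Γ G v (of Γ w k) f =
        of Γ w k • f + edgePathHom Γ G v (of Γ w k) 0 := by
      rcases eq_or_ne w v with rfl | hw
      · simp [edgePathHom, partialConj_of_self, smul_add, add_assoc]
      · simp [edgePathHom, partialConj_of_ne hw]
    rw [edgePath, map_mul, Equiv.Perm.mul_apply, Equiv.Perm.mul_apply, ih, ih, hof]
    simp [mul_smul, add_assoc]

lemma edgePath_mul (x y : GraphProduct Γ G) :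
    edgePath Γ G v (x * y) = edgePath Γ G v x + x • edgePath Γ G v y := by
  rw [edgePath, map_mul, Equiv.Perm.mul_apply, edgePathHom_apply, add_comm, ← edgePath]

lemma edgePath_mul_apply (x y : GraphProduct Γ G) (z : Edge Γ G v) :
    edgePath Γ G v (x * y) z = edgePath Γ G v x z + edgePath Γ G v y (x⁻¹ • z) := by
  rw [edgePath_mul, Finsupp.add_apply, Finsupp.comapSMul_apply]

lemma edgePath_of_self (g : G v) : edgePath Γ G v (of Γ v g) =
    Finsupp.single (QuotientGroup.mk 1) 1 - Finsupp.single (QuotientGroup.mk (of Γ v g)) 1 := by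
  have hfst : of Γ v g • -Finsupp.single (QuotientGroup.mk 1 : Edge Γ G v) (1 : ℤ) =
      -Finsupp.single (QuotientGroup.mk (of Γ v g)) 1 := by
    rw [smul_neg, Finsupp.comapSMul_single, MulAction.Quotient.smul_mk, smul_eq_mul, mul_one]
  simp [edgePath, edgePathHom, partialConj_of_self, hfst, sub_eq_neg_add]

lemma edgePath_eq_zero_of_mem {x : GraphProduct Γ G} (hx : x ∈ vertexSubgroup Γ G {v}ᶜ) :
    edgePath Γ G v x = 0 := by
  have hle : vertexSubgroup Γ G {v}ᶜ ≤ (edgePathHom Γ G v).eqLocus (MulAction.toPermHom _ _) :=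
    vertexSubgroup_le.mpr fun w hw k => partialConj_of_ne hw k
  rw [edgePath, show edgePathHom Γ G v x = _ from hle hx]
  exact smul_zero x

lemma edgePath_one : edgePath Γ G v 1 = 0 :=
  edgePath_eq_zero_of_mem (one_mem _)

lemma edgePath_congr {x y : GraphProduct Γ G} (h : (x : Edge Γ G v) = y) :
    edgePath Γ G v x = edgePath Γ G v y := by
  have hmem := linkSubgroup_le_vertexSubgroup_compl (Γ.loopless.irrefl v) (QuotientGroup.eq.mp h)
  rw [← mul_inv_cancel_left x y, edgePath_mul, edgePath_eq_zero_of_mem hmem, smul_zero, add_zero]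

lemma mk_one_eq_mk_iff {x : GraphProduct Γ G} :
    (QuotientGroup.mk 1 : Edge Γ G v) = x ↔ x ∈ linkSubgroup Γ G v :=
  QuotientGroup.eq.trans (by rw [inv_one, one_mul])

lemma mk_one_ne_mk_of {w : V} (hw : ¬ Γ.Adj v w) {k : G w} (hk : k ≠ 1) :
    (QuotientGroup.mk 1 : Edge Γ G v) ≠ of Γ w k :=
  mt mk_one_eq_mk_iff.mp (of_notMem_vertexSubgroup hw hk)

lemma edgePath_mul_of_self (x : GraphProduct Γ G) (g : G v) :
    edgePath Γ G v (x * of Γ v g) = edgePath Γ G v x + Finsupp.single (x : Edge Γ G v) 1 -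
      Finsupp.single (QuotientGroup.mk (x * of Γ v g)) 1 := by
  simp only [edgePath_mul, edgePath_of_self, smul_sub, Finsupp.comapSMul_single,
    MulAction.Quotient.smul_mk, smul_eq_mul, mul_one, add_sub_assoc]

lemma edgePath_mul_of_ne {w : V} (hw : w ≠ v) (x : GraphProduct Γ G) (k : G w) :
    edgePath Γ G v (x * of Γ w k) = edgePath Γ G v x := by
  rw [edgePath_mul, edgePath_eq_zero_of_mem (of_mem_vertexSubgroup hw k), smul_zero, add_zero]

lemma edgePath_mul_of_apply_of_ne {x : GraphProduct Γ G} {w : V} {k : G w} {z : Edge Γ G v}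
    (hx : (x : Edge Γ G v) ≠ z) (hxk : (QuotientGroup.mk (x * of Γ w k) : Edge Γ G v) ≠ z) :
    edgePath Γ G v (x * of Γ w k) z = edgePath Γ G v x z := by
  rcases eq_or_ne w v with rfl | hw
  · simp [edgePath_mul_of_self, Finsupp.single_eq_of_ne' hx, Finsupp.single_eq_of_ne' hxk]
  · rw [edgePath_mul_of_ne hw]

/-- A path in a tree crosses the base edge at most once, and only in the positive direction if it
starts at `𝒢(Γ ∖ v)`. -/
lemma edgePath_apply_mk_one (x : GraphProduct Γ G) :
    edgePath Γ G v x (QuotientGroup.mk 1) = 0 ∨ edgePath Γ G v x (QuotientGroup.mk 1) = 1 := by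
  induction x using induction_on_right with
  | one => simp [edgePath_one]
  | mul_of x w k ih =>
    by_cases hxk : (QuotientGroup.mk (x * of Γ w k) : Edge Γ G v) = QuotientGroup.mk 1
    · simp [edgePath_congr hxk, edgePath_one]
    by_cases hx : (x : Edge Γ G v) = QuotientGroup.mk 1
    · rcases eq_or_ne w v with rfl | hw
      · simp [edgePath_mul_of_self, edgePath_congr hx, edgePath_one, hx,
          Finsupp.single_eq_of_ne' hxk]
      · rwa [edgePath_mul_of_ne hw]
    · rwa [edgePath_mul_of_apply_of_ne hx hxk]

lemma edgePath_apply_eq_of_ne {x y p : GraphProduct Γ G} {z : Edge Γ G v}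
    (hx : edgePath Γ G v x z ≠ edgePath Γ G v p z)
    (hy : edgePath Γ G v y z ≠ edgePath Γ G v p z) :
    edgePath Γ G v x z = edgePath Γ G v y z := by
  obtain ⟨g, rfl⟩ := QuotientGroup.mk_surjective z
  have htranslate (x : GraphProduct Γ G) : edgePath Γ G v x g =
      edgePath Γ G v g g + edgePath Γ G v (g⁻¹ * x) (QuotientGroup.mk 1) := by
    conv_lhs => rw [← mul_inv_cancel_left g x, edgePath_mul_apply]
    rw [MulAction.Quotient.smul_mk, smul_eq_mul, inv_mul_cancel]
  rw [htranslate x, htranslate p] at hx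
  rw [htranslate y, htranslate p] at hy
  rw [htranslate x, htranslate y]
  have := edgePath_apply_mk_one (v := v) (g⁻¹ * x)
  have := edgePath_apply_mk_one (v := v) (g⁻¹ * y)
  have := edgePath_apply_mk_one (v := v) (g⁻¹ * p)
  lia

/-- Two distinct edges cut a tree into three pieces, so one of the four combinations of sides is
empty. -/
lemma edgePath_apply_mk_eq_or {g g' : GraphProduct Γ G} (h : (g : Edge Γ G v) ≠ g')
    (x : GraphProduct Γ G) :
    edgePath Γ G v x g' = edgePath Γ G v g g' ∨ edgePath Γ G v x g = edgePath Γ G v g' g := by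
  rw [← mul_inv_cancel_left g x]
  induction g⁻¹ * x using induction_on_right with
  | one => simp
  | mul_of y w k ih =>
    rw [← mul_assoc]
    by_cases hxg : (QuotientGroup.mk (g * y * of Γ w k) : Edge Γ G v) = g
    · exact Or.inl (by rw [edgePath_congr hxg])
    by_cases hxg' : (QuotientGroup.mk (g * y * of Γ w k) : Edge Γ G v) = g'
    · exact Or.inr (by rw [edgePath_congr hxg'])
    by_cases hyg : (QuotientGroup.mk (g * y) : Edge Γ G v) = g
    · exact Or.inl (by rw [edgePath_mul_of_apply_of_ne (hyg.trans_ne h) hxg', edgePath_congr hyg])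
    by_cases hyg' : (QuotientGroup.mk (g * y) : Edge Γ G v) = g'
    · exact Or.inr (by
        rw [edgePath_mul_of_apply_of_ne (hyg'.trans_ne h.symm) hxg, edgePath_congr hyg'])
    rwa [edgePath_mul_of_apply_of_ne hyg hxg, edgePath_mul_of_apply_of_ne hyg' hxg']

/-! ### Half-spaces of the Bass–Serre tree -/

open scoped Pointwise

variable (Γ G v) in
/-- The elements whose paths leave the edge `z` on the same side as the path of `p` does: a
half-space of the Bass–Serre tree. -/
def side (p : GraphProduct Γ G) (z : Edge Γ G v) : Set (GraphProduct Γ G) :=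
  {x | edgePath Γ G v x z = edgePath Γ G v p z}

lemma mem_side {x p : GraphProduct Γ G} {z : Edge Γ G v} :
    x ∈ side Γ G v p z ↔ edgePath Γ G v x z = edgePath Γ G v p z :=
  Iff.rfl

lemma side_eq_of_mem {x p : GraphProduct Γ G} {z : Edge Γ G v} (hx : x ∈ side Γ G v p z) :
    side Γ G v x z = side Γ G v p z := by
  ext y
  rw [mem_side, mem_side, mem_side.mp hx]

lemma mem_side_of_notMem {x y p : GraphProduct Γ G} {z : Edge Γ G v} (hx : x ∉ side Γ G v p z)
    (hy : y ∉ side Γ G v p z) : x ∈ side Γ G v y z :=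
  edgePath_apply_eq_of_ne hx hy

lemma smul_side (g p : GraphProduct Γ G) (z : Edge Γ G v) :
    g • side Γ G v p z = side Γ G v (g * p) (g • z) := by
  have hinv (y : GraphProduct Γ G) : edgePath Γ G v (g * y) (g • z) =
      edgePath Γ G v g (g • z) + edgePath Γ G v y z := by
    rw [edgePath_mul_apply, inv_smul_smul]
  ext x
  rw [Set.mem_smul_set_iff_inv_smul_mem, mem_side, mem_side, hinv, ← mul_inv_cancel_left g x, hinv,
    add_right_inj, smul_eq_mul, inv_mul_cancel_left]

lemma side_subset_or_subset {p q : GraphProduct Γ G} {z z' : Edge Γ G v}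
    (hz : q ∉ side Γ G v p z) (hz' : q ∉ side Γ G v p z') :
    side Γ G v p z ⊆ side Γ G v p z' ∨ side Γ G v p z' ⊆ side Γ G v p z := by
  rcases eq_or_ne z z' with rfl | hne
  · exact Or.inl subset_rfl
  obtain ⟨g, rfl⟩ := QuotientGroup.mk_surjective z
  obtain ⟨g', rfl⟩ := QuotientGroup.mk_surjective z'
  by_contra! h
  obtain ⟨⟨x, hx, hx'⟩, y, hy', hy⟩ := And.imp Set.not_subset.mp Set.not_subset.mp h
  have := mem_side_of_notMem hy hz
  have := mem_side_of_notMem hx' hz'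
  have hcut := edgePath_apply_mk_eq_or hne
  have := hcut p
  have := hcut q
  have := hcut x
  have := hcut y
  simp only [mem_side] at *
  lia

lemma disjoint_side_smul_side {p h : GraphProduct Γ G}
    (hne : (QuotientGroup.mk 1 : Edge Γ G v) ≠ h)
    (hp : edgePath Γ G v p (QuotientGroup.mk 1) ≠ edgePath Γ G v h (QuotientGroup.mk 1))
    (hp' : edgePath Γ G v h h + edgePath Γ G v p (QuotientGroup.mk 1) ≠ 0) :
    Disjoint (side Γ G v p (QuotientGroup.mk 1)) (h • side Γ G v p (QuotientGroup.mk 1)) := by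
  rw [smul_side, MulAction.Quotient.smul_mk, smul_eq_mul, mul_one, Set.disjoint_left]
  intro x hx hx'
  have hinv : h⁻¹ • (h : Edge Γ G v) = QuotientGroup.mk 1 := by
    rw [MulAction.Quotient.smul_mk, smul_eq_mul, inv_mul_cancel]
  rw [mem_side, edgePath_mul_apply, hinv] at hx'
  rw [mem_side] at hx
  rcases edgePath_apply_mk_eq_or hne x with hcut | hcut
  · rw [edgePath_one, Finsupp.zero_apply] at hcut
    exact hp' (hx'.symm.trans hcut)
  · exact hp (hx.symm.trans hcut)

lemma exists_disjoint_side_mk_one_smul_side [∀ v, Nontrivial (G v)] (hv : ¬ IsCentralVertex Γ v)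
    (p : GraphProduct Γ G) : ∃ h : GraphProduct Γ G,
      Disjoint (side Γ G v p (QuotientGroup.mk 1)) (h • side Γ G v p (QuotientGroup.mk 1)) := by
  by_cases hp : edgePath Γ G v p (QuotientGroup.mk 1) = 0
  · obtain ⟨s, hs⟩ := exists_ne (1 : G v)
    have hs' := mk_one_ne_mk_of (Γ.loopless.irrefl v) hs
    refine ⟨of Γ v s, disjoint_side_smul_side hs' ?_ ?_⟩ <;>
      simp [hp, edgePath_of_self, Finsupp.single_eq_of_ne hs', Finsupp.single_eq_of_ne' hs']
  · rw [IsCentralVertex] at hv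
    push Not at hv
    obtain ⟨w, hwv, hadj⟩ := hv
    obtain ⟨k, hk⟩ := exists_ne (1 : G w)
    have hzero := edgePath_eq_zero_of_mem (of_mem_vertexSubgroup (Γ := Γ) hwv k)
    exact ⟨of Γ w k, disjoint_side_smul_side (mk_one_ne_mk_of hadj hk) (by simpa [hzero])
      (by simpa [hzero])⟩

lemma exists_disjoint_side_smul_side [∀ v, Nontrivial (G v)] (hv : ¬ IsCentralVertex Γ v)
    (p : GraphProduct Γ G) (z : Edge Γ G v) :
    ∃ h : GraphProduct Γ G, Disjoint (side Γ G v p z) (h • side Γ G v p z) := by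
  obtain ⟨g, rfl⟩ := QuotientGroup.mk_surjective z
  obtain ⟨h, hdisj⟩ := exists_disjoint_side_mk_one_smul_side hv (g⁻¹ * p)
  have htranslate : g • side Γ G v (g⁻¹ * p) (QuotientGroup.mk 1) = side Γ G v p g := by
    rw [smul_side, mul_inv_cancel_left, MulAction.Quotient.smul_mk, smul_eq_mul, mul_one]
  refine ⟨g * h * g⁻¹, ?_⟩
  rwa [← htranslate, ← mul_smul, inv_mul_cancel_right, mul_smul, Set.disjoint_smul_set]

section NormalSubgroup

variable {N : Subgroup (GraphProduct Γ G)} [N.Normal]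

/-- The translates of the side by `N` are nested, because all of them contain `1` and miss `h`, and
there are finitely many of them, because they are bounded by edges of the path of `h`. -/
lemma smul_side_eq_self [∀ v, Nontrivial (G v)] (hv : ¬ IsCentralVertex Γ v) {z : Edge Γ G v}
    (hz : ∀ n ∈ N, edgePath Γ G v n z = 0) {n : GraphProduct Γ G} (hn : n ∈ N) :
    n • side Γ G v 1 z = side Γ G v 1 z := by
  obtain ⟨h, hdisj⟩ := exists_disjoint_side_smul_side hv 1 z
  have hN {m : GraphProduct Γ G} (hm : m ∈ N) : m ∈ side Γ G v 1 z := by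
    rw [mem_side, hz m hm, edgePath_one, Finsupp.zero_apply]
  have htranslate {m : GraphProduct Γ G} (hm : m ∈ N) :
      m • side Γ G v 1 z = side Γ G v 1 (m • z) := by
    rw [← side_eq_of_mem (hN (inv_mem hm)), smul_side, mul_inv_cancel]
  have hh {m : GraphProduct Γ G} (hm : m ∈ N) : h ∉ side Γ G v 1 (m • z) := by
    rw [← htranslate hm, Set.mem_smul_set_iff_inv_smul_mem, smul_eq_mul]
    refine hdisj.notMem_of_mem_right (Set.mem_smul_set_iff_inv_smul_mem.mpr (hN ?_))
    simpa [mul_assoc] using ‹N.Normal›.conj_mem _ (inv_mem hm) h⁻¹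
  have hfin : (MulAction.orbit N (side Γ G v 1 z)).Finite := by
    refine ((edgePath Γ G v h).support.finite_toSet.image (side Γ G v 1)).subset ?_
    rintro _ ⟨⟨m, hm⟩, rfl⟩
    refine ⟨m • z, Finsupp.mem_support_iff.mpr fun h0 => hh hm ?_, (htranslate hm).symm⟩
    rw [mem_side, h0, edgePath_one, Finsupp.zero_apply]
  have hnested := side_subset_or_subset (by simpa using hh (one_mem N)) (hh hn)
  rw [← htranslate hn] at hnested
  rcases hnested with hsub | hsub
  · exact smul_eq_self_of_subset_smul (g := (⟨n, hn⟩ : N)) hfin hsub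
  · refine (inv_smul_eq_iff.mp ?_).symm
    exact smul_eq_self_of_subset_smul (g := (⟨n, hn⟩⁻¹ : N)) hfin (Set.subset_smul_set_iff.mpr
      (by simpa using hsub))

lemma edgePath_eq_zero_of_forall_apply_eq_zero [∀ v, Nontrivial (G v)]
    (hv : ¬ IsCentralVertex Γ v) {z : Edge Γ G v} (hz : ∀ n ∈ N, edgePath Γ G v n z = 0)
    {n : GraphProduct Γ G} (hn : n ∈ N) : edgePath Γ G v n = 0 := by
  ext y
  obtain ⟨g, rfl⟩ := MulAction.exists_smul_eq (GraphProduct Γ G) z y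
  have hstable : n • side Γ G v g (g • z) = side Γ G v g (g • z) := by
    have hside : side Γ G v g (g • z) = g • side Γ G v 1 z := by rw [smul_side, mul_one]
    have hconj := smul_side_eq_self hv hz (‹N.Normal›.conj_mem n hn g⁻¹)
    rw [inv_inv, mul_smul, mul_smul, inv_smul_eq_iff] at hconj
    rw [hside, hconj]
  have hmem : n ∈ side Γ G v 1 (g • z) := by
    by_cases h1 : 1 ∈ side Γ G v g (g • z)
    · rw [side_eq_of_mem h1, ← hstable]
      exact Set.mem_smul_set.mpr ⟨1, h1, mul_one n⟩
    · refine mem_side_of_notMem (fun hmem => h1 ?_) h1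
      rwa [← hstable, Set.mem_smul_set_iff_inv_smul_mem, smul_eq_mul, inv_mul_cancel] at hmem
  rw [mem_side.mp hmem, edgePath_one]

lemma le_linkSubgroup_of_edgePath_eq_zero [Nontrivial (G v)]
    (h : ∀ n ∈ N, edgePath Γ G v n = 0) : N ≤ linkSubgroup Γ G v := by
  intro n hn
  obtain ⟨s, hs⟩ := exists_ne (1 : G v)
  have hfix : n • edgePath Γ G v (of Γ v s) = edgePath Γ G v (of Γ v s) := by
    have hconj := h _ (‹N.Normal›.conj_mem n hn (of Γ v s)⁻¹)
    rw [inv_inv, mul_assoc] at hconj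
    calc n • edgePath Γ G v (of Γ v s) = edgePath Γ G v (n * of Γ v s) := by
          rw [edgePath_mul, h n hn, zero_add]
      _ = edgePath Γ G v (of Γ v s) := by
          rw [← mul_inv_cancel_left (of Γ v s) (n * of Γ v s), edgePath_mul, hconj, smul_zero,
            add_zero]
  have hs' := mk_one_ne_mk_of (Γ.loopless.irrefl v) hs
  by_contra hmem
  have hn' := mt mk_one_eq_mk_iff.mp hmem
  have heval := DFunLike.congr_fun hfix (n : Edge Γ G v)
  simp only [Finsupp.comapSMul_apply, MulAction.Quotient.smul_mk, smul_eq_mul, inv_mul_cancel,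
    edgePath_of_self, Finsupp.sub_apply, Finsupp.single_eq_same, Finsupp.single_eq_of_ne hs',
    Finsupp.single_eq_of_ne' hn'] at heval
  have hnonneg : 0 ≤ Finsupp.single (QuotientGroup.mk (of Γ v s) : Edge Γ G v) (1 : ℤ) n :=
    (Finsupp.single_nonneg.mpr zero_le_one) _
  lia

lemma le_linkSubgroup_of_le_vertexSubgroup_compl [Nontrivial (G v)]
    (h : N ≤ vertexSubgroup Γ G {v}ᶜ) : N ≤ linkSubgroup Γ G v :=
  le_linkSubgroup_of_edgePath_eq_zero fun _ hn => edgePath_eq_zero_of_mem (h hn)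

theorem le_linkSubgroup_or_finiteIndex_sup [∀ v, Nontrivial (G v)]
    (hv : ¬ IsCentralVertex Γ v) (hN : N.FG) :
    N ≤ linkSubgroup Γ G v ∨ (N ⊔ linkSubgroup Γ G v).FiniteIndex := by
  by_cases h : ∃ z : Edge Γ G v, ∀ n ∈ N, edgePath Γ G v n z = 0
  · obtain ⟨z, hz⟩ := h
    exact Or.inl <| le_linkSubgroup_of_edgePath_eq_zero fun n =>
      edgePath_eq_zero_of_forall_apply_eq_zero hv hz
  · push Not at h
    obtain ⟨Z, hZ, hsupp⟩ := exists_finite_forall_exists_smul_mem_of_fg edgePath_mul hN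
    refine Or.inr (finiteIndex_sup_of_forall_exists_smul_mem hZ fun z => ?_)
    obtain ⟨n, hn, hnz⟩ := h z
    exact hsupp n hn z hnz

end NormalSubgroup

end EdgePath

/-! ### The images of the vertex groups in a quotient -/

section Quotient

variable (N : Subgroup (GraphProduct Γ G)) [N.Normal]

/-- The canonical homomorphism from a vertex group to the quotient `𝒢/N`. -/
def quotientOf (v : V) : G v →* GraphProduct Γ G ⧸ N :=
  (QuotientGroup.mk' N).comp (of Γ v)

lemma iSup_range_quotientOf : ⨆ v, (quotientOf N v).range = ⊤ := by
  simp only [quotientOf, MonoidHom.range_comp, ← Subgroup.map_iSup, iSup_range_of]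
  exact Subgroup.map_top_of_surjective _ (QuotientGroup.mk'_surjective N)

lemma finiteIndex_centralizer_range_quotientOf {v : V}
    [(N ⊔ linkSubgroup Γ G v).FiniteIndex] :
    (Subgroup.centralizer ((quotientOf N v).range : Set (GraphProduct Γ G ⧸ N))).FiniteIndex := by
  set C := Subgroup.centralizer ((quotientOf N v).range : Set (GraphProduct Γ G ⧸ N)) with hC
  have hle : N ⊔ linkSubgroup Γ G v ≤ C.comap (QuotientGroup.mk' N) := by
    refine sup_le (fun n hn => ?_) fun x hx => ?_
    · rw [Subgroup.mem_comap, QuotientGroup.mk'_apply, (QuotientGroup.eq_one_iff n).mpr hn]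
      exact one_mem _
    · rw [Subgroup.mem_comap, hC, Subgroup.mem_centralizer_iff]
      rintro _ ⟨g, rfl⟩
      have hcomm := Subgroup.mem_centralizer_iff.mp (linkSubgroup_le_centralizer v hx) _ ⟨g, rfl⟩
      simpa [quotientOf] using congrArg (QuotientGroup.mk' N) hcomm
  have hindex := (Subgroup.finiteIndex_of_le hle).index_ne_zero
  rw [Subgroup.index_comap_of_surjective C (QuotientGroup.mk'_surjective N)] at hindex
  exact ⟨hindex⟩

lemma range_quotientOf_sup_centralizer {v : V} (hv : IsCentralVertex Γ v) :
    (quotientOf N v).range ⊔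
      Subgroup.centralizer ((quotientOf N v).range : Set (GraphProduct Γ G ⧸ N)) = ⊤ := by
  rw [← top_le_iff, ← iSup_range_quotientOf N]
  refine iSup_le fun w => ?_
  rcases eq_or_ne w v with rfl | hw
  · exact le_sup_left
  · refine le_sup_of_le_right ?_
    rintro _ ⟨k, rfl⟩
    rw [Subgroup.mem_centralizer_iff]
    rintro _ ⟨g, rfl⟩
    exact ((commute_of (hv w hw) g k).map (QuotientGroup.mk' N)).eq

end Quotient

end GraphProduct

/-! ### Join decompositions and full subgroups -/

section JoinDecomposition

variable {V : Type} {Γ : SimpleGraph V}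

lemma mem_of_reachable {S : Set V} (hS : ∀ ⦃u w⦄, Γ.Adj u w → u ∈ S → w ∈ S) {u w : V}
    (h : Γ.Reachable u w) (hu : u ∈ S) : w ∈ S := by
  obtain ⟨p⟩ := h
  induction p with
  | nil => exact hu
  | cons hadj _ ih => exact ih (hS hadj hu)

lemma not_isJoinOfTwo_supp (c : Γᶜ.ConnectedComponent) : ¬ IsJoinOfTwo Γ c.supp := by
  rintro ⟨A, B, ⟨a, ha⟩, ⟨b, hb⟩, hdisj, hunion, hadj⟩
  have hclosed ⦃u w : V⦄ (huw : Γᶜ.Adj u w) (hu : u ∈ A) : w ∈ A := by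
    have hw : w ∈ A ∪ B := hunion ▸ c.mem_supp_of_adj_mem_supp (hunion ▸ Or.inl hu) huw
    exact hw.resolve_right fun hwB => huw.2 (hadj u hu w hwB)
  have hreach : Γᶜ.Reachable a b :=
    c.reachable_of_mem_supp (hunion ▸ Or.inl ha) (hunion ▸ Or.inr hb)
  exact Set.disjoint_left.mp hdisj (mem_of_reachable hclosed hreach ha) hb

lemma isJoinDecomposition_supp {k : ℕ} (e : Fin k ≃ Γᶜ.ConnectedComponent) :
    IsJoinDecomposition Γ fun i => (e i).supp := by
  refine ⟨fun i => (e i).nonempty_supp, fun v => ?_, fun i j hij a ha b hb => ?_,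
    fun i => not_isJoinOfTwo_supp (e i)⟩
  · exact ⟨e.symm (Γᶜ.connectedComponentMk v), by simp, fun i hi =>
      e.eq_symm_apply.mpr ((SimpleGraph.ConnectedComponent.mem_supp_iff _ _).mp hi).symm⟩
  · by_contra hadj
    have hne : a ≠ b := by
      rintro rfl
      exact hij (e.injective (SimpleGraph.ConnectedComponent.eq_of_common_vertex ha hb))
    have hb' := (e i).mem_supp_of_adj_mem_supp ha (show Γᶜ.Adj a b from ⟨hne, hadj⟩)
    exact hij (e.injective (SimpleGraph.ConnectedComponent.eq_of_common_vertex hb' hb))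

lemma IsCentralVertex.supp_compl_eq {v : V} (hv : IsCentralVertex Γ v) :
    (Γᶜ.connectedComponentMk v).supp = {v} := by
  have hclosed ⦃u w : V⦄ (huw : Γᶜ.Adj u w) (hu : u ∈ ({v} : Set V)) : w ∈ ({v} : Set V) := by
    obtain rfl : u = v := hu
    exact absurd (hv w huw.ne') huw.2
  refine Set.Subset.antisymm (fun w hw => ?_) (Set.singleton_subset_iff.mpr rfl)
  exact mem_of_reachable hclosed (SimpleGraph.ConnectedComponent.exact hw).symm rfl

end JoinDecomposition

namespace IsFullSubgroup

open GraphProduct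

variable {V : Type} [Finite V] {Γ : SimpleGraph V} {G : V → Type} [∀ v, Group (G v)]
  {N : Subgroup (GraphProduct Γ G)}

lemma inf_vertexSubgroup_supp_ne_bot (hN : IsFullSubgroup Γ G N) (c : Γᶜ.ConnectedComponent) :
    N ⊓ vertexSubgroup Γ G c.supp ≠ ⊥ := by
  obtain ⟨k, ⟨e⟩⟩ := Finite.exists_equiv_fin Γᶜ.ConnectedComponent
  simpa using hN k _ (isJoinDecomposition_supp e.symm) (e c)

lemma ker_quotientOf_ne_bot [N.Normal] (hN : IsFullSubgroup Γ G N) {v : V}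
    (hv : IsCentralVertex Γ v) : (quotientOf N v).ker ≠ ⊥ := by
  have hne := hN.inf_vertexSubgroup_supp_ne_bot (Γᶜ.connectedComponentMk v)
  rw [hv.supp_compl_eq, vertexSubgroup_singleton] at hne
  contrapose! hne
  rw [eq_bot_iff]
  rintro _ ⟨hg, g, rfl⟩
  have hker : g ∈ (quotientOf N v).ker := (QuotientGroup.eq_one_iff (of Γ v g)).mpr hg
  rw [hne, Subgroup.mem_bot] at hker
  rw [hker, map_one]
  exact one_mem _

variable [N.Normal] [∀ v, Nontrivial (G v)]

lemma not_le_linkSubgroup (hN : IsFullSubgroup Γ G N) (v : V) : ¬ N ≤ linkSubgroup Γ G v := by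
  intro hle
  set c := Γᶜ.connectedComponentMk v
  have hclosed ⦃u w : V⦄ (huw : Γᶜ.Adj u w) (hu : N ≤ linkSubgroup Γ G u) :
      N ≤ linkSubgroup Γ G w :=
    le_linkSubgroup_of_le_vertexSubgroup_compl
      (hu.trans (linkSubgroup_le_vertexSubgroup_compl huw.2))
  have hsupp : N ≤ vertexSubgroup Γ G c.suppᶜ := fun n hn =>
    mem_vertexSubgroup_compl c.supp.toFinite fun u hu =>
      linkSubgroup_le_vertexSubgroup_compl (Γ.loopless.irrefl u) <|
        mem_of_reachable (S := {u | N ≤ linkSubgroup Γ G u}) hclosed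
          (SimpleGraph.ConnectedComponent.exact hu).symm hle hn
  refine hN.inf_vertexSubgroup_supp_ne_bot c (le_bot_iff.mp ((inf_le_inf_right _ hsupp).trans ?_))
  rw [vertexSubgroup_inf, Set.compl_inter_self, vertexSubgroup_empty]

lemma finiteIndex_sup_linkSubgroup (hN : IsFullSubgroup Γ G N) (hfg : N.FG) {v : V}
    (hv : ¬ IsCentralVertex Γ v) : (N ⊔ linkSubgroup Γ G v).FiniteIndex :=
  (le_linkSubgroup_or_finiteIndex_sup hv hfg).resolve_left (hN.not_le_linkSubgroup v)

end IsFullSubgroup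

theorem quotient_of_graph_product_by_fg_full_normal_subgroup
    {V : Type} [Fintype V] (Γ : SimpleGraph V) (G : V → Type)
    [∀ v, Group (G v)] [∀ v, Nontrivial (G v)]
    (N : Subgroup (GraphProduct Γ G)) [N.Normal]
    (hfg : N.FG) (hfull : IsFullSubgroup Γ G N)
    (hcentral : ∀ v : V, IsCentralVertex Γ v →
      ∀ (Q : Type) (instQ : Group Q), letI := instQ
        ∀ φ : G v →* Q, Function.Surjective φ → φ.ker ≠ ⊥ →
          AbelianByFinite Q ∧ FiniteByAbelian Q) :
    AbelianByFinite (GraphProduct Γ G ⧸ N) ∧ FiniteByAbelian (GraphProduct Γ G ⧸ N) := by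
  refine abelianByFinite_and_finiteByAbelian_iff.mpr <|
    finiteIndex_center_of_iSup_eq_top (GraphProduct.iSup_range_quotientOf N) fun v => ?_
  by_cases hv : IsCentralVertex Γ v
  · have := abelianByFinite_and_finiteByAbelian_iff.mp <|
      hcentral v hv _ inferInstance (GraphProduct.quotientOf N v).rangeRestrict
        (GraphProduct.quotientOf N v).rangeRestrict_surjective
        ((GraphProduct.quotientOf N v).ker_rangeRestrict ▸ hfull.ker_quotientOf_ne_bot hv)
    exact finiteIndex_centralizer_of_sup_eq_top (GraphProduct.range_quotientOf_sup_centralizer N hv)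
  · have := hfull.finiteIndex_sup_linkSubgroup hfg hv
    exact GraphProduct.finiteIndex_centralizer_range_quotientOf N
end

section
/- Let Γ be a finite simple graph and let G = G(Γ) be the associated right-angled Artin group. Let N be any finitely generated normal subgroup of G. Then G/N is virtually a RAAG, i.e., there exist a finite simple graph Δ and a finite index subgroup of G/N isomorphic to the right-angled Artin group G(Δ). -/
/-- The defining relators of a right-angled Artin group: commutators of generators
corresponding to adjacent vertices. -/
def raagRels {V : Type} (Γ : SimpleGraph V) : Set (FreeGroup V) :=
  { r | ∃ v w : V, Γ.Adj v w ∧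
      r = FreeGroup.of v * FreeGroup.of w * (FreeGroup.of v)⁻¹ * (FreeGroup.of w)⁻¹ }

/-- The right-angled Artin group associated to the simple graph `Γ`. -/
abbrev RAAG {V : Type} (Γ : SimpleGraph V) : Type := PresentedGroup (raagRels Γ)

/-!
For a vertex `v`, the group `G = G(Γ)` is an HNN extension of the subgroup generated by the other
vertices, with stable letter `v` commuting with `L = ⟨link v⟩`. The Fox derivative along `v`, with
coefficients in `ℤ[G/L]`, is a cocycle `d` recording paths in the Bass–Serre tree.

* If some `n ∈ N` has `d n ∉ (n - 1) ℤ[G/L]`, then finite generation and normality of `N` force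
  finitely many `N`-orbits on `G/L`, that is, `N L` has finite index in `G`. Otherwise every
  `n ∈ N` is elliptic: it has a power conjugate into the subgroup generated by the other vertices.
* Let `A` be the set of vertices for which `N L` has infinite index. Since `G` embeds in a
  semidirect product `Free ⋊ ⟨other vertices⟩`, ellipticity at every vertex of `A` makes `N` die
  under the retraction of `G` onto `G(A)`.
* If `b ∉ A`, then `⁅u ^ k, b⁆ ∈ N` for some `k > 0` for every vertex `u`. When `u ≠ b` is not
  adjacent to `b`, this commutator is not elliptic at `u`, so `u ∉ A`. Hence `Γ` is the join of `A`
  and its complement `B`, and `G/N` is the product of `G(A)` and the image of `⟨B⟩`.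
* The generators of the image of `⟨B⟩` have centralizers of finite index, so this group is
  virtually central, hence virtually `ℤ^J`, and joining `A` with a complete graph on `J` gives the
  required graph.
-/

open groupCohomology (IsCocycle₁ map_one_of_isCocycle₁ map_inv_of_isCocycle₁)

attribute [local instance] Finsupp.comapSMul Finsupp.comapMulAction
  Finsupp.comapDistribMulAction

section Cocycle

variable {G M : Type*} [Group G] [AddCommGroup M] [DistribMulAction G M]

theorem map_inv_eq_of_isCocycle₁ {d : G → M} (hd : IsCocycle₁ d) (g : G) :
    d g⁻¹ = -(g⁻¹ • d g) := by
  rw [← smul_neg, ← map_inv_of_isCocycle₁ hd, inv_smul_smul]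

theorem cocycle_mem_of_mem_closure {d : G → M} (hd : IsCocycle₁ d) {S : Set G} {W : AddSubgroup M}
    (hW : ∀ g ∈ Subgroup.closure S, ∀ y ∈ W, g • y ∈ W) (hS : ∀ s ∈ S, d s ∈ W) {g : G}
    (hg : g ∈ Subgroup.closure S) : d g ∈ W := by
  induction hg using Subgroup.closure_induction with
  | mem s hs => exact hS s hs
  | one => rw [map_one_of_isCocycle₁ hd]; exact W.zero_mem
  | mul g h hg _ ihg ihh => rw [hd]; exact W.add_mem (hW g hg _ ihh) ihg
  | inv g hg ih =>
    rw [map_inv_eq_of_isCocycle₁ hd]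
    exact W.neg_mem (hW _ (inv_mem hg) _ ih)

theorem cocycle_eqOn_closure {d e : G → M} (hd : IsCocycle₁ d) (he : IsCocycle₁ e) {S : Set G}
    (hS : S.EqOn d e) : Set.EqOn d e (Subgroup.closure S) := by
  have hde : IsCocycle₁ (d - e) := fun g h ↦ by
    simp only [Pi.sub_apply, hd g h, he g h, smul_sub]
    abel
  intro g hg
  refine sub_eq_zero.mp (cocycle_mem_of_mem_closure hde (W := ⊥) (fun g _ y hy ↦ ?_) ?_ hg)
  · rw [AddSubgroup.mem_bot.mp hy, smul_zero]
    exact zero_mem _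
  · exact fun s hs ↦ sub_eq_zero.mpr (hS hs)

variable (M) in
/-- The values at `n` of the 1-coboundaries with coefficients in `M`. A 1-cocycle restricts to a
coboundary on the cyclic subgroup `⟨n⟩` exactly when its value at `n` lies in this subgroup. -/
def coboundaryValues (n : G) : AddSubgroup M :=
  (DistribSMul.toAddMonoidHom M n - AddMonoidHom.id M).range

theorem smul_sub_mem_coboundaryValues {n g : G} (hg : g ∈ Subgroup.zpowers n) (y : M) :
    g • y - y ∈ coboundaryValues M n := by
  rw [Subgroup.zpowers_eq_closure] at hg
  induction hg using Subgroup.closure_induction generalizing y with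
  | mem g hg => rw [Set.mem_singleton_iff.mp hg]; exact ⟨y, rfl⟩
  | one => rw [one_smul, sub_self]; exact zero_mem _
  | mul g h _ _ ihg ihh =>
    rw [mul_smul, ← sub_add_sub_cancel _ (h • y)]
    exact add_mem (ihg _) (ihh y)
  | inv g _ ih =>
    rw [← neg_sub, neg_mem_iff]
    simpa only [smul_inv_smul] using ih (g⁻¹ • y)

theorem smul_cocycle_conj_sub_mem_coboundaryValues {d : G → M} (hd : IsCocycle₁ d) (g n : G) :
    g • d (g⁻¹ * n * g) - d n ∈ coboundaryValues M n := by
  refine ⟨d g, ?_⟩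
  change n • d g - d g = _
  rw [mul_assoc, hd, hd n, smul_add, smul_inv_smul, map_inv_of_isCocycle₁ hd]
  abel

end Cocycle

section PermutationModule

variable {G X : Type*} [Group G] [MulAction G X]

theorem mapDomain_mk_orbitRel_smul (H : Subgroup G) {h : G} (hh : h ∈ H) (f : X →₀ ℤ) :
    (h • f).mapDomain (Quotient.mk (MulAction.orbitRel H X)) =
      f.mapDomain (Quotient.mk (MulAction.orbitRel H X)) := by
  rw [Finsupp.comapSMul_def, ← Finsupp.mapDomain_comp]
  exact Finsupp.mapDomain_congr fun x _ ↦ Quotient.sound ⟨⟨h, hh⟩, rfl⟩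

theorem mapDomain_mk_orbitRel_zpowers_eq_zero_iff (n : G) (f : X →₀ ℤ) :
    f.mapDomain (Quotient.mk (MulAction.orbitRel (Subgroup.zpowers n) X)) = 0 ↔
      f ∈ coboundaryValues (X →₀ ℤ) n := by
  constructor
  · intro hf
    have mod_section (f : X →₀ ℤ) :
        (f.mapDomain (Quotient.mk (MulAction.orbitRel (Subgroup.zpowers n) X))).mapDomain
          Quotient.out - f ∈ coboundaryValues (X →₀ ℤ) n := by
      induction f using Finsupp.induction_linear with
      | zero => simp only [Finsupp.mapDomain_zero, sub_zero, zero_mem]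
      | add f g hf hg =>
        rw [Finsupp.mapDomain_add, Finsupp.mapDomain_add, add_sub_add_comm]
        exact add_mem hf hg
      | single x c =>
        obtain ⟨⟨g, hg⟩, hgx⟩ := Quotient.mk_out (s := MulAction.orbitRel (Subgroup.zpowers n) X) x
        rw [Finsupp.mapDomain_single, Finsupp.mapDomain_single, ← hgx]
        change Finsupp.single (g • x) c - _ ∈ _
        rw [← Finsupp.comapSMul_single]
        exact smul_sub_mem_coboundaryValues hg _
    simpa only [hf, Finsupp.mapDomain_zero, zero_sub, neg_mem_iff] using mod_section f
  · rintro ⟨y, rfl⟩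
    change Finsupp.mapDomain.addMonoidHom _ (n • y - y) = 0
    rw [map_sub, sub_eq_zero]
    exact mapDomain_mk_orbitRel_smul _ (Subgroup.mem_zpowers n) y

/-- Modulo `n - 1`, the value `d n` is `g • d (g⁻¹ * n * g)` for every `g`, which is supported in
`g • U`, and the translates of `U` have empty intersection. -/
theorem mem_coboundaryValues_of_support_subset [MulAction.IsPretransitive G X] {d : G → X →₀ ℤ}
    (hd : IsCocycle₁ d) {N : Subgroup G} [N.Normal] {U : Set X} (hU : U ≠ Set.univ)
    (hNU : ∀ m ∈ N, ∀ x, m • x ∈ U → x ∈ U) (hdU : ∀ m ∈ N, ((d m).support : Set X) ⊆ U)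
    {n : G} (hn : n ∈ N) : d n ∈ coboundaryValues (X →₀ ℤ) n := by
  classical
  obtain ⟨x₀, hx₀⟩ := (Set.ne_univ_iff_exists_notMem U).mp hU
  set q : X → MulAction.orbitRel.Quotient (Subgroup.zpowers n) X := Quotient.mk _ with hq
  have push_conj (g : G) : (g • d (g⁻¹ * n * g)).mapDomain q = (d n).mapDomain q := by
    have := (mapDomain_mk_orbitRel_zpowers_eq_zero_iff n _).mpr
      (smul_cocycle_conj_sub_mem_coboundaryValues hd g n)
    rw [← sub_eq_zero, ← this]
    exact (map_sub (Finsupp.mapDomain.addMonoidHom (M := ℤ) q) _ _).symm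
  rw [← mapDomain_mk_orbitRel_zpowers_eq_zero_iff]
  refine Finsupp.ext (Quotient.ind fun e ↦ ?_)
  obtain ⟨g, rfl⟩ := MulAction.exists_smul_eq G x₀ e
  rw [← hq, ← push_conj g]
  by_contra hne
  obtain ⟨x, hx, hxe⟩ :=
    Finset.mem_image.mp (Finsupp.mapDomain_support (Finsupp.mem_support_iff.mpr hne))
  obtain ⟨⟨m, hm⟩, rfl⟩ := Quotient.exact hxe
  rw [Finsupp.mem_support_iff, Finsupp.comapSMul_apply] at hx
  have hmem : (g⁻¹ * m * g) • x₀ ∈ U := by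
    rw [mul_smul, mul_smul]
    have hconj := Subgroup.Normal.conj_mem' ‹N.Normal› n hn g
    exact hdU _ hconj (Finsupp.mem_support_iff.mpr hx)
  have hmN : m ∈ N := Subgroup.zpowers_le.mpr hn hm
  exact hx₀ (hNU _ (Subgroup.Normal.conj_mem' ‹N.Normal› m hmN g) x₀ hmem)

theorem finite_orbits_of_notMem_coboundaryValues [MulAction.IsPretransitive G X] {d : G → X →₀ ℤ}
    (hd : IsCocycle₁ d) {N : Subgroup G} [N.Normal] (hfg : N.FG) {n : G} (hn : n ∈ N)
    (hdn : d n ∉ coboundaryValues (X →₀ ℤ) n) : Finite (MulAction.orbitRel.Quotient N X) := by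
  obtain ⟨S, rfl⟩ := hfg
  let orbit : X → MulAction.orbitRel.Quotient (Subgroup.closure (S : Set G)) X := Quotient.mk _
  let F := orbit '' ⋃ s ∈ S, ((d s).support : Set X)
  have orbit_smul {m : G} (hm : m ∈ Subgroup.closure (S : Set G)) (x : X) :
      orbit (m • x) = orbit x := Quotient.sound ⟨⟨m, hm⟩, rfl⟩
  have hF : F.Finite := (Set.toFinite _).image _
  have hdF : ∀ m ∈ Subgroup.closure (S : Set G), ((d m).support : Set X) ⊆ orbit ⁻¹' F := by
    intro m hm
    refine cocycle_mem_of_mem_closure hd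
      (W := (Finsupp.supported ℤ ℤ (orbit ⁻¹' F)).toAddSubgroup) (fun g hg y hy x hx ↦ ?_) ?_ hm
    · rw [Finset.mem_coe, Finsupp.mem_support_iff, Finsupp.comapSMul_apply] at hx
      have := hy (Finsupp.mem_support_iff.mpr hx)
      rwa [Set.mem_preimage, orbit_smul (inv_mem hg)] at this
    · exact fun s hs x hx ↦ ⟨x, Set.mem_biUnion hs hx, rfl⟩
  have hcover : orbit ⁻¹' F = Set.univ := by
    by_contra hne
    refine hdn (mem_coboundaryValues_of_support_subset hd hne (fun m hm x hx ↦ ?_) hdF hn)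
    rwa [Set.mem_preimage, orbit_smul hm] at hx
  rw [← Set.finite_univ_iff]
  refine hF.subset fun c _ ↦ ?_
  induction c using Quotient.ind with | _ x => exact hcover.ge (Set.mem_univ x)

theorem finiteIndex_sup_of_finite_orbits (N L : Subgroup G) [hN : N.Normal]
    (h : Finite (MulAction.orbitRel.Quotient N (G ⧸ L))) : (N ⊔ L).FiniteIndex := by
  let toCoset : MulAction.orbitRel.Quotient N (G ⧸ L) → G ⧸ (N ⊔ L) :=
    Quotient.lift (Subgroup.quotientMapOfLE le_sup_right) fun a b ↦ by
      rintro ⟨⟨m, hm⟩, rfl⟩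
      induction b using QuotientGroup.induction_on with | H b =>
      refine QuotientGroup.eq.mpr (le_sup_left (a := N) ?_)
      simpa [mul_assoc] using hN.conj_mem' _ (inv_mem hm) b
  have toCoset_surjective : Function.Surjective toCoset := fun y ↦
    QuotientGroup.induction_on y fun g ↦ ⟨Quotient.mk _ (g : G ⧸ L), rfl⟩
  have := Finite.of_surjective toCoset toCoset_surjective
  exact Subgroup.finiteIndex_of_finite_quotient

end PermutationModule

section Tree

variable {G E X : Type*} [Group G] [MulAction G E] [MulAction G X]

theorem exists_pow_smul_eq_of_smul_finsupp_eq {n : G} {f : X →₀ ℤ} (hf : f ≠ 0) (hn : n • f = f) :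
    ∃ k > 0, ∃ x : X, n ^ k • x = x := by
  obtain ⟨x, hx⟩ := Finsupp.support_nonempty_iff.mpr hf
  have pow_smul_mem (i : ℕ) : n ^ i • x ∈ (f.support : Set X) := by
    induction i with
    | zero => simpa using hx
    | succ i ih =>
      rw [Finset.mem_coe, Finsupp.mem_support_iff] at ih ⊢
      rwa [← hn, Finsupp.comapSMul_apply, pow_succ', mul_smul, inv_smul_smul]
  obtain ⟨i, j, hij, h⟩ := f.support.finite_toSet.exists_lt_map_eq_of_forall_mem pow_smul_mem
  refine ⟨j - i, Nat.sub_pos_of_lt hij, n ^ i • x, ?_⟩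
  rw [smul_smul, ← pow_add, Nat.sub_add_cancel hij.le, ← h]

theorem mapDomain_smul (φ : E →[G] X) (g : G) (f : E →₀ ℤ) :
    (g • f).mapDomain φ = g • f.mapDomain φ := by
  simp only [Finsupp.comapSMul_def, ← Finsupp.mapDomain_comp]
  exact Finsupp.mapDomain_congr fun e _ ↦ map_smul φ g e

/-- The 1-chain `c` is a path from `x` to `n • x` in the graph with edges `E`, vertices `X` and
end points `s`, `t`. If it is `n • y - y`, then `x - ∂y` is a nonzero `n`-invariant 0-chain. -/
theorem exists_pow_smul_eq_of_mem_coboundaryValues (s t : E →[G] X) {n : G} {c : E →₀ ℤ} {x : X}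
    (hpath : c.mapDomain t - c.mapDomain s = Finsupp.single (n • x) 1 - Finsupp.single x 1)
    (hc : c ∈ coboundaryValues (E →₀ ℤ) n) : ∃ k > 0, ∃ y : X, n ^ k • y = y := by
  obtain ⟨y, rfl⟩ := hc
  let boundary : (E →₀ ℤ) →+ (X →₀ ℤ) :=
    Finsupp.mapDomain.addMonoidHom t - Finsupp.mapDomain.addMonoidHom s
  have boundary_smul (g : G) (f : E →₀ ℤ) : boundary (g • f) = g • boundary f := by
    change (g • f).mapDomain t - (g • f).mapDomain s = _
    rw [mapDomain_smul, mapDomain_smul, ← smul_sub]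
    rfl
  have degree_boundary (f : E →₀ ℤ) : (boundary f).degree = 0 := by
    change (f.mapDomain t - f.mapDomain s).degree = 0
    rw [map_sub, Finsupp.degree_mapDomain, Finsupp.degree_mapDomain, sub_self]
  apply exists_pow_smul_eq_of_smul_finsupp_eq (f := Finsupp.single x 1 - boundary y)
  · intro h
    have := congrArg Finsupp.degree h
    rw [map_sub, degree_boundary, Finsupp.degree_single, map_zero] at this
    exact one_ne_zero ((sub_zero _).symm.trans this)
  · change boundary (n • y - y) = _ at hpath
    rw [map_sub, boundary_smul] at hpath
    rw [smul_sub, Finsupp.comapSMul_single]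
    exact sub_eq_sub_iff_sub_eq_sub.mpr hpath.symm

theorem smul_mk_one_of_mem {L : Subgroup G} {g : G} (hg : g ∈ L) :
    g • ((1 : G) : G ⧸ L) = (1 : G) :=
  QuotientGroup.eq.mpr (by simpa using inv_mem hg)

/-- The equivariant map from `G ⧸ L` sending the trivial coset to a point `x` fixed by `L`. -/
def cosetHom {L : Subgroup G} {x : X} (hL : L ≤ MulAction.stabilizer G x) : G ⧸ L →[G] X where
  toFun := Quotient.lift (· • x) fun a b hab ↦ by
    have := hL (QuotientGroup.leftRel_apply.mp hab)
    rw [MulAction.mem_stabilizer_iff, mul_smul, inv_smul_eq_iff] at this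
    exact this.symm
  map_smul' g c := QuotientGroup.induction_on c fun a ↦ mul_smul g a x

/-- Let the edge `gL` of the graph with vertices `G ⧸ K` and edges `G ⧸ L` join `gK` to `gvK`, as in
the Bass–Serre tree of an HNN extension with stable letter `v`. Then `d g` is a path from `K` to
`gK`. -/
theorem exists_conj_pow_mem_of_mem_coboundaryValues {v : G} {L K : Subgroup G} (hLK : L ≤ K)
    (hv : ∀ l ∈ L, Commute l v) (htop : Subgroup.closure (insert v (K : Set G)) = ⊤)
    {d : G → (G ⧸ L →₀ ℤ)} (hd : IsCocycle₁ d)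
    (hdv : d v = Finsupp.single ((1 : G) : G ⧸ L) 1) (hdK : ∀ k ∈ K, d k = 0) {n : G}
    (hn : d n ∈ coboundaryValues (G ⧸ L →₀ ℤ) n) : ∃ k > 0, ∃ g, g⁻¹ * n ^ k * g ∈ K := by
  let base : G ⧸ K := (1 : G)
  have smul_base {a : G} (ha : a ∈ K) : a • base = base := smul_mk_one_of_mem ha
  let s : G ⧸ L →[G] G ⧸ K := cosetHom (x := base) fun l hl ↦ smul_base (hLK hl)
  let t : G ⧸ L →[G] G ⧸ K := cosetHom (x := v • base) fun l hl ↦ by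
    rw [MulAction.mem_stabilizer_iff, smul_smul, (hv l hl).eq, mul_smul, smul_base (hLK hl)]
  have s_one : s (1 : G) = base := one_smul G base
  have t_one : t (1 : G) = v • base := one_smul G (v • base)
  have path (g : G) : (d g).mapDomain t - (d g).mapDomain s =
      Finsupp.single (g • base) 1 - Finsupp.single base 1 := by
    refine cocycle_eqOn_closure (d := fun g ↦ (d g).mapDomain t - (d g).mapDomain s)
      (e := fun g ↦ Finsupp.single (g • base) (1 : ℤ) - Finsupp.single base 1)
      (S := insert v (K : Set G)) ?_ ?_ ?_ (htop.ge (Subgroup.mem_top g))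
    · intro a b
      simp only [hd a b, Finsupp.mapDomain_add, mapDomain_smul, smul_sub]
      abel
    · intro a b
      simp only [smul_sub, Finsupp.comapSMul_single, mul_smul]
      abel
    · rintro a (rfl | ha)
      · simp only [hdv, Finsupp.mapDomain_single, s_one, t_one]
      · simp only [hdK a ha, smul_base ha, Finsupp.mapDomain_zero, sub_self]
  obtain ⟨k, hk, x, hx⟩ := exists_pow_smul_eq_of_mem_coboundaryValues s t (path n) hn
  induction x using QuotientGroup.induction_on with | H g =>
  refine ⟨k, hk, g, ?_⟩
  rw [mul_assoc]
  exact QuotientGroup.eq.mp hx.symm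

end Tree

namespace RAAG

section Basic

variable {V : Type} (Γ : SimpleGraph V) {H : Type*} [Group H]

/-- The canonical generator of `RAAG Γ` attached to the vertex `v`. -/
def of (v : V) : RAAG Γ :=
  PresentedGroup.of v

variable {Γ}

theorem commute_of_of {v w : V} (h : Γ.Adj v w) : Commute (of Γ v) (of Γ w) := by
  have : PresentedGroup.mk (raagRels Γ)
      (FreeGroup.of v * FreeGroup.of w * (FreeGroup.of v)⁻¹ * (FreeGroup.of w)⁻¹) = 1 :=
    PresentedGroup.one_of_mem ⟨v, w, h, rfl⟩
  rw [map_mul, map_mul, map_mul, map_inv, map_inv, mul_inv_eq_one, mul_inv_eq_iff_eq_mul] at this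
  exact this

theorem closure_range_of : Subgroup.closure (Set.range (of Γ)) = ⊤ :=
  PresentedGroup.closure_range_of _

theorem hom_ext {f g : RAAG Γ →* H} (h : ∀ v, f (of Γ v) = g (of Γ v)) : f = g :=
  PresentedGroup.ext h

/-- The homomorphism out of `RAAG Γ` with prescribed values on the generators. -/
def lift (f : V → H) (hf : ∀ v w, Γ.Adj v w → Commute (f v) (f w)) : RAAG Γ →* H :=
  PresentedGroup.toGroup (f := f) (by
    rintro _ ⟨v, w, hvw, rfl⟩
    simp only [map_mul, map_inv, FreeGroup.lift_apply_of, (hf v w hvw).eq, mul_inv_cancel_right,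
      mul_inv_cancel])

@[simp]
theorem lift_of (f : V → H) (hf : ∀ v w, Γ.Adj v w → Commute (f v) (f w)) (v : V) :
    lift f hf (of Γ v) = f v :=
  PresentedGroup.toGroup.of _

/-- The homomorphism induced by a homomorphism of graphs. -/
def map {W : Type} {Δ : SimpleGraph W} (φ : Γ →g Δ) : RAAG Γ →* RAAG Δ :=
  lift (fun v ↦ of Δ (φ v)) fun _ _ h ↦ commute_of_of (φ.map_adj h)

theorem map_of {W : Type} {Δ : SimpleGraph W} (φ : Γ →g Δ) (v : V) :
    map φ (of Γ v) = of Δ (φ v) :=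
  lift_of _ _ v

variable (Γ)

/-- The standard parabolic subgroup of `RAAG Γ` generated by the vertices in `S`. -/
def parabolic (S : Set V) : Subgroup (RAAG Γ) :=
  Subgroup.closure (of Γ '' S)

/-- The subgroup of `RAAG Γ` generated by the link of `v`. -/
abbrev link (v : V) : Subgroup (RAAG Γ) :=
  parabolic Γ (Γ.neighborSet v)

variable {Γ}

theorem of_mem_parabolic {S : Set V} {v : V} (hv : v ∈ S) : of Γ v ∈ parabolic Γ S :=
  Subgroup.subset_closure ⟨v, hv, rfl⟩

theorem parabolic_mono {S T : Set V} (h : S ⊆ T) : parabolic Γ S ≤ parabolic Γ T :=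
  Subgroup.closure_mono (Set.image_mono h)

theorem link_le_parabolic_compl (v : V) : link Γ v ≤ parabolic Γ {v}ᶜ :=
  parabolic_mono fun _ hw ↦ (Γ.ne_of_adj hw).symm

theorem commute_map_of_mem_parabolic {S : Set V} {f : RAAG Γ →* H} {y : H}
    (h : ∀ v ∈ S, Commute (f (of Γ v)) y) {g : RAAG Γ} (hg : g ∈ parabolic Γ S) :
    Commute (f g) y := by
  have : parabolic Γ S ≤ (Subgroup.centralizer {y}).comap f := by
    rw [parabolic, Subgroup.closure_le]
    rintro _ ⟨v, hv, rfl⟩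
    exact Subgroup.mem_centralizer_singleton_iff.mpr (h v hv)
  exact Subgroup.mem_centralizer_singleton_iff.mp (this hg)

theorem commute_of_mem_link {v : V} {g : RAAG Γ} (hg : g ∈ link Γ v) : Commute g (of Γ v) :=
  commute_map_of_mem_parabolic (f := MonoidHom.id _) (fun _ hw ↦ (commute_of_of hw).symm) hg

theorem closure_insert_of_parabolic_compl (v : V) :
    Subgroup.closure (insert (of Γ v) (parabolic Γ {v}ᶜ : Set (RAAG Γ))) = ⊤ := by
  rw [eq_top_iff, ← closure_range_of, Subgroup.closure_le]
  rintro _ ⟨w, rfl⟩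
  by_cases h : w = v
  · exact Subgroup.subset_closure (.inl (congrArg _ h))
  · exact Subgroup.subset_closure (.inr (of_mem_parabolic h))

end Basic

section Retraction

variable {V : Type} (Γ : SimpleGraph V) (S T : Set V)

/-- The homomorphism induced by the inclusion of the full subgraph on `S`. -/
def incl : RAAG (Γ.induce S) →* RAAG Γ :=
  map (SimpleGraph.Embedding.induce S).toHom

open scoped Classical in
/-- The homomorphism onto the group of the full subgraph on `S` killing the other generators. -/
noncomputable def proj : RAAG Γ →* RAAG (Γ.induce S) :=
  lift (fun v ↦ if hv : v ∈ S then of (Γ.induce S) ⟨v, hv⟩ else 1) fun v w h ↦ by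
    split_ifs with hv hw
    · exact commute_of_of (SimpleGraph.induce_adj.mpr h)
    · exact Commute.one_right _
    · exact Commute.one_left _
    · exact Commute.one_left _

/-- The endomorphism of `RAAG Γ` fixing the generators in `S` and killing the others. -/
noncomputable def retract : RAAG Γ →* RAAG Γ :=
  (incl Γ S).comp (proj Γ S)

variable {Γ S T}

theorem incl_of (v : S) : incl Γ S (of _ v) = of Γ v :=
  map_of _ v

theorem proj_of_mem {v : V} (hv : v ∈ S) : proj Γ S (of Γ v) = of _ ⟨v, hv⟩ :=
  (lift_of _ _ v).trans (dif_pos hv)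

theorem proj_of_notMem {v : V} (hv : v ∉ S) : proj Γ S (of Γ v) = 1 :=
  (lift_of _ _ v).trans (dif_neg hv)

theorem proj_incl (g : RAAG (Γ.induce S)) : proj Γ S (incl Γ S g) = g := by
  suffices (proj Γ S).comp (incl Γ S) = MonoidHom.id _ from DFunLike.congr_fun this g
  exact hom_ext fun v ↦ (congrArg (proj Γ S) (incl_of v)).trans (proj_of_mem v.2)

theorem retract_of_mem {v : V} (hv : v ∈ S) : retract Γ S (of Γ v) = of Γ v :=
  (congrArg (incl Γ S) (proj_of_mem hv)).trans (incl_of _)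

theorem retract_of_notMem {v : V} (hv : v ∉ S) : retract Γ S (of Γ v) = 1 :=
  (congrArg _ (proj_of_notMem hv)).trans (map_one _)

theorem retract_eq_one_iff {g : RAAG Γ} : retract Γ S g = 1 ↔ proj Γ S g = 1 := by
  refine ⟨fun h ↦ ?_, fun h ↦ (congrArg _ h).trans (map_one _)⟩
  rw [← proj_incl (proj Γ S g)]
  exact (congrArg _ h).trans (map_one _)

theorem retract_empty : retract Γ ∅ = 1 :=
  hom_ext fun v ↦ retract_of_notMem (Set.notMem_empty v)

theorem retract_retract (g : RAAG Γ) : retract Γ S (retract Γ T g) = retract Γ (S ∩ T) g := by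
  suffices (retract Γ S).comp (retract Γ T) = retract Γ (S ∩ T) from DFunLike.congr_fun this g
  refine hom_ext fun v ↦ ?_
  rw [MonoidHom.comp_apply]
  by_cases hT : v ∈ T
  · rw [retract_of_mem hT]
    by_cases hS : v ∈ S
    · rw [retract_of_mem hS, retract_of_mem (Set.mem_inter hS hT)]
    · rw [retract_of_notMem hS, retract_of_notMem fun h ↦ hS h.1]
  · rw [retract_of_notMem hT, map_one, retract_of_notMem fun h ↦ hT h.2]

theorem retract_eq_self_of_mem_parabolic {g : RAAG Γ} (hg : g ∈ parabolic Γ S) :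
    retract Γ S g = g := by
  refine MonoidHom.eqOn_closure (f := retract Γ S) (g := MonoidHom.id _) ?_ hg
  rintro _ ⟨v, hv, rfl⟩
  exact retract_of_mem hv

end Retraction

section Derivation

variable {V : Type} {Γ : SimpleGraph V}

theorem exists_isCocycle₁_of_eq {M : Type*} [AddCommGroup M] [DistribMulAction (RAAG Γ) M]
    (c : V → M) (hc : ∀ v w, Γ.Adj v w → c v + of Γ v • c w = c w + of Γ w • c v) :
    ∃ d : RAAG Γ → M, IsCocycle₁ d ∧ ∀ v, d (of Γ v) = c v := by
  let φ : RAAG Γ →* MulAut (Multiplicative M) :=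
    (MulAutMultiplicative M).symm.toMonoidHom.comp (DistribMulAction.toAddAut (RAAG Γ) M)
  let graph : RAAG Γ →* Multiplicative M ⋊[φ] RAAG Γ :=
    lift (fun v ↦ ⟨.ofAdd (c v), of Γ v⟩) fun v w h ↦
      SemidirectProduct.ext (hc v w h) (commute_of_of h)
  have graph_of (v : V) : graph (of Γ v) = ⟨.ofAdd (c v), of Γ v⟩ := lift_of _ _ v
  have graph_right (g : RAAG Γ) : (graph g).right = g := by
    suffices SemidirectProduct.rightHom.comp graph = MonoidHom.id _ from DFunLike.congr_fun this g
    refine hom_ext fun v ↦ ?_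
    rw [MonoidHom.comp_apply, graph_of]
    rfl
  refine ⟨fun g ↦ (graph g).left.toAdd, fun g h ↦ ?_, fun v ↦ ?_⟩
  · beta_reduce
    rw [map_mul, SemidirectProduct.mul_left, graph_right, add_comm]
    rfl
  · simp only [graph_of, toAdd_ofAdd]

/-- The Fox derivative along `v`, with coefficients reduced modulo the link of `v`. -/
theorem exists_isCocycle₁_of_eq_single (Γ : SimpleGraph V) (v : V) :
    ∃ d : RAAG Γ → (RAAG Γ ⧸ link Γ v →₀ ℤ), IsCocycle₁ d ∧
      d (of Γ v) = Finsupp.single ((1 : RAAG Γ) : RAAG Γ ⧸ link Γ v) 1 ∧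
      ∀ g ∈ parabolic Γ {v}ᶜ, d g = 0 := by
  classical
  let e : RAAG Γ ⧸ link Γ v →₀ ℤ := Finsupp.single ((1 : RAAG Γ) : RAAG Γ ⧸ link Γ v) 1
  have smul_e {w : V} (hw : Γ.Adj v w) : of Γ w • e = e := by
    rw [Finsupp.comapSMul_single]
    exact congrArg (Finsupp.single · 1) (smul_mk_one_of_mem (L := link Γ v) (of_mem_parabolic hw))
  let c : V → (RAAG Γ ⧸ link Γ v →₀ ℤ) := Pi.single v e
  have c_self : c v = e := Pi.single_eq_same (M := fun _ ↦ _) v e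
  have c_of_ne {w : V} (hw : w ≠ v) : c w = 0 := Pi.single_eq_of_ne (M := fun _ ↦ _) hw e
  have hc (u w : V) (huw : Γ.Adj u w) : c u + of Γ u • c w = c w + of Γ w • c u := by
    obtain rfl | hu := eq_or_ne u v
    · rw [c_self, c_of_ne huw.ne', smul_zero, smul_e huw, add_comm]
    obtain rfl | hw := eq_or_ne w v
    · rw [c_self, c_of_ne hu, smul_zero, smul_e huw.symm, add_comm]
    · rw [c_of_ne hu, c_of_ne hw, smul_zero, smul_zero]
  obtain ⟨d, hd, hdc⟩ := exists_isCocycle₁_of_eq c hc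
  refine ⟨d, hd, (hdc v).trans c_self, fun g hg ↦ ?_⟩
  refine cocycle_eqOn_closure hd (e := 0) (fun _ _ ↦ ?_) ?_ hg
  · simp only [Pi.zero_apply, smul_zero, add_zero]
  · rintro _ ⟨w, hw, rfl⟩
    exact (hdc w).trans (c_of_ne hw)

variable (Γ) in
/-- Some positive power of `n` is conjugate into the subgroup generated by the vertices other than
`v`; equivalently, `n` fixes a vertex of the Bass–Serre tree of the splitting of `RAAG Γ` as an HNN
extension with stable letter `v`. -/
def IsElliptic (v : V) (n : RAAG Γ) : Prop :=
  ∃ k > 0, ∃ g, g⁻¹ * n ^ k * g ∈ parabolic Γ {v}ᶜ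

theorem finiteIndex_sup_link_of_not_isElliptic {N : Subgroup (RAAG Γ)} [N.Normal] (hfg : N.FG)
    {v : V} {n : RAAG Γ} (hn : n ∈ N) (h : ¬ IsElliptic Γ v n) : (N ⊔ link Γ v).FiniteIndex := by
  obtain ⟨d, hd, hdv, hd₀⟩ := exists_isCocycle₁_of_eq_single Γ v
  have hdn : d n ∉ coboundaryValues (RAAG Γ ⧸ link Γ v →₀ ℤ) n := fun hdn ↦
    h (exists_conj_pow_mem_of_mem_coboundaryValues (link_le_parabolic_compl v)
      (fun _ ↦ commute_of_mem_link) (closure_insert_of_parabolic_compl v) hd hdv hd₀ hdn)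
  exact finiteIndex_sup_of_finite_orbits N (link Γ v)
    (finite_orbits_of_notMem_coboundaryValues hd hfg hn hdn)

end Derivation

end RAAG

/-- The action of the permutations of a basis on the free group. -/
def freeGroupPermHom (Y : Type*) : Equiv.Perm Y →* MulAut (FreeGroup Y) where
  toFun := FreeGroup.freeGroupCongr
  map_one' := FreeGroup.freeGroupCongr_refl
  map_mul' σ τ := (FreeGroup.freeGroupCongr_trans τ σ).symm

theorem freeGroupPermHom_of {Y : Type*} (σ : Equiv.Perm Y) (y : Y) :
    freeGroupPermHom Y σ (FreeGroup.of y) = FreeGroup.of (σ y) :=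
  FreeGroup.map.of

namespace RAAG

variable {V : Type} {Γ : SimpleGraph V}

section Torsion

variable (Γ) in
/-- The action of `RAAG Γ` on the free group with basis the cosets of the link of `v`. -/
def freeAction (v : V) : RAAG Γ →* MulAut (FreeGroup (RAAG Γ ⧸ link Γ v)) :=
  (freeGroupPermHom _).comp (MulAction.toPermHom (RAAG Γ) (RAAG Γ ⧸ link Γ v))

theorem freeAction_of (v : V) (g : RAAG Γ) (c : RAAG Γ ⧸ link Γ v) :
    freeAction Γ v g (FreeGroup.of c) = FreeGroup.of (g • c) :=
  freeGroupPermHom_of _ c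

theorem commute_inl_inr_of {v w : V} (h : Γ.Adj v w) :
    Commute (SemidirectProduct.inl (FreeGroup.of ((1 : RAAG Γ) : RAAG Γ ⧸ link Γ v)))
      (SemidirectProduct.inr (φ := freeAction Γ v) (of Γ w)) := by
  have := SemidirectProduct.inl_aut (φ := freeAction Γ v) (of Γ w)
    (FreeGroup.of ((1 : RAAG Γ) : RAAG Γ ⧸ link Γ v))
  have of_mem_link : of Γ w ∈ link Γ v := of_mem_parabolic h
  rw [freeAction_of, smul_mk_one_of_mem of_mem_link, map_inv, eq_mul_inv_iff_mul_eq] at this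
  exact this

open scoped Classical in
variable (Γ) in
/-- The homomorphism sending `v` to the basis element of the trivial coset and every other generator
to its copy in the second factor. -/
noncomputable def toFreeSemidirect (v : V) :
    RAAG Γ →* FreeGroup (RAAG Γ ⧸ link Γ v) ⋊[freeAction Γ v] RAAG Γ :=
  lift (fun w ↦ if w = v then .inl (FreeGroup.of ((1 : RAAG Γ) : RAAG Γ ⧸ link Γ v))
    else .inr (of Γ w)) fun u w h ↦ by
    split_ifs with hu hw hw
    · exact Commute.refl _
    · exact commute_inl_inr_of (hu ▸ h)
    · exact (commute_inl_inr_of (hw ▸ h.symm)).symm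
    · exact (commute_of_of h).map _

theorem toFreeSemidirect_of_self (v : V) : toFreeSemidirect Γ v (of Γ v) =
    .inl (FreeGroup.of ((1 : RAAG Γ) : RAAG Γ ⧸ link Γ v)) :=
  (lift_of _ _ v).trans (if_pos rfl)

theorem toFreeSemidirect_of_ne {v w : V} (h : w ≠ v) :
    toFreeSemidirect Γ v (of Γ w) = .inr (of Γ w) :=
  (lift_of _ _ w).trans (if_neg h)

theorem right_toFreeSemidirect (v : V) (g : RAAG Γ) :
    (toFreeSemidirect Γ v g).right = retract Γ {v}ᶜ g := by
  suffices SemidirectProduct.rightHom.comp (toFreeSemidirect Γ v) = retract Γ {v}ᶜ from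
    DFunLike.congr_fun this g
  refine hom_ext fun w ↦ ?_
  rw [MonoidHom.comp_apply]
  obtain rfl | hw := eq_or_ne w v
  · rw [toFreeSemidirect_of_self, SemidirectProduct.rightHom_inl,
      retract_of_notMem (S := {w}ᶜ) fun h ↦ h rfl]
  · rw [toFreeSemidirect_of_ne hw, SemidirectProduct.rightHom_inr,
      retract_of_mem (show w ∈ ({v}ᶜ : Set V) from hw)]

/-- The inverse sends the basis element `gL` to `g * v * g⁻¹`. -/
theorem toFreeSemidirect_injective (v : V) : Function.Injective (toFreeSemidirect Γ v) := by
  let conj : RAAG Γ ⧸ link Γ v → RAAG Γ :=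
    Quotient.lift (fun g ↦ g * of Γ v * g⁻¹) fun a b hab ↦ by
      have := (commute_of_mem_link (QuotientGroup.leftRel_apply.mp hab)).eq
      calc a * of Γ v * a⁻¹ = a * (of Γ v * (a⁻¹ * b)) * b⁻¹ := by group
        _ = b * of Γ v * b⁻¹ := by rw [← this]; group
  have conj_smul (g : RAAG Γ) (c : RAAG Γ ⧸ link Γ v) : conj (g • c) = g * conj c * g⁻¹ := by
    induction c using QuotientGroup.induction_on with | H a =>
    change g * a * of Γ v * (g * a)⁻¹ = g * (a * of Γ v * a⁻¹) * g⁻¹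
    group
  let inverse : FreeGroup (RAAG Γ ⧸ link Γ v) ⋊[freeAction Γ v] RAAG Γ →* RAAG Γ :=
    SemidirectProduct.lift (FreeGroup.lift conj) (MonoidHom.id _) fun g ↦ by
      refine FreeGroup.ext_hom _ _ fun c ↦ ?_
      simp [freeAction_of, conj_smul]
  suffices inverse.comp (toFreeSemidirect Γ v) = MonoidHom.id _ from
    Function.LeftInverse.injective (g := inverse) (DFunLike.congr_fun this)
  refine hom_ext fun w ↦ ?_
  rw [MonoidHom.comp_apply]
  obtain rfl | hw := eq_or_ne w v
  · rw [toFreeSemidirect_of_self, SemidirectProduct.lift_inl, FreeGroup.lift_apply_of]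
    change 1 * of Γ w * 1⁻¹ = of Γ w
    group
  · rw [toFreeSemidirect_of_ne hw, SemidirectProduct.lift_inr]

theorem eq_one_of_pow_eq_one_of_retract_compl_eq_one {v : V} {g : RAAG Γ}
    (hg : retract Γ {v}ᶜ g = 1) {k : ℕ} (hk : k ≠ 0) (hgk : g ^ k = 1) : g = 1 := by
  have hleft : toFreeSemidirect Γ v g = .inl (toFreeSemidirect Γ v g).left :=
    SemidirectProduct.ext rfl ((right_toFreeSemidirect v g).trans hg)
  have : (toFreeSemidirect Γ v g).left ^ k = 1 :=
    SemidirectProduct.inl_injective (φ := freeAction Γ v) <| by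
      rw [map_pow, ← hleft, ← map_pow, hgk, map_one, map_one]
  rw [pow_eq_one_iff_left hk] at this
  rw [← toFreeSemidirect_injective v |>.eq_iff, hleft, this, map_one, map_one]

theorem retract_eq_one_of_isElliptic {S : Set V} (hS : S.Finite) {n : RAAG Γ}
    (hn : ∀ v ∈ S, IsElliptic Γ v n) : retract Γ S n = 1 := by
  induction S, hS using Set.Finite.induction_on with
  | empty => rw [retract_empty, MonoidHom.one_apply]
  | @insert v S hv _ ih =>
    replace ih : retract Γ S n = 1 := ih fun w hw ↦ hn w (Set.mem_insert_of_mem v hw)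
    obtain ⟨k, hk, g, hg⟩ := hn v (Set.mem_insert v S)
    have hinter : {v}ᶜ ∩ insert v S = S := by
      rw [Set.inter_comm, ← Set.sdiff_eq, Set.insert_sdiff_self_of_notMem hv]
    refine eq_one_of_pow_eq_one_of_retract_compl_eq_one (v := v) ?_ hk.ne' ?_
    · rw [retract_retract, hinter, ih]
    · have : retract Γ (insert v S) (g⁻¹ * n ^ k * g) = 1 := by
        rw [← retract_eq_self_of_mem_parabolic hg, retract_retract, Set.inter_comm, hinter,
          map_mul, map_mul, map_pow, ih, one_pow, mul_one, map_inv, inv_mul_cancel]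
      rwa [map_mul, map_mul, map_inv, mul_assoc, inv_mul_eq_one, eq_comm, mul_eq_right,
        map_pow] at this

end Torsion

section Propagation

open scoped commutatorElement

theorem exists_hom_of_not_adj {H : Type*} [Group H] {u v : V} (huv : u ≠ v) (h : ¬ Γ.Adj u v)
    (a b : H) : ∃ f : RAAG Γ →* H, f (of Γ u) = a ∧ f (of Γ v) = b ∧
      ∀ w, w ≠ u → w ≠ v → f (of Γ w) = 1 := by
  classical
  let f : V → H := fun w ↦ if w = u then a else if w = v then b else 1
  have hf (w x : V) (hwx : Γ.Adj w x) : Commute (f w) (f x) := by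
    have : ¬ Γ.Adj v u := fun h' ↦ h h'.symm
    simp only [f]
    split_ifs <;> simp_all
  refine ⟨lift f hf, ?_, ?_, fun w hu hv ↦ ?_⟩ <;> simp_all [f, huv.symm]

theorem commutator_of_mem_of_mem_sup_link {N : Subgroup (RAAG Γ)} [hN : N.Normal] {v : V}
    {g : RAAG Γ} (hg : g ∈ N ⊔ link Γ v) : ⁅g, of Γ v⁆ ∈ N := by
  obtain ⟨m, hm, l, hl, rfl⟩ := Subgroup.mem_sup_of_normal_left.mp hg
  have : ⁅m * l, of Γ v⁆ = m * (of Γ v * m⁻¹ * (of Γ v)⁻¹) := by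
    calc ⁅m * l, of Γ v⁆ = m * (l * of Γ v) * l⁻¹ * m⁻¹ * (of Γ v)⁻¹ := by
          rw [commutatorElement_def]; group
      _ = m * (of Γ v * m⁻¹ * (of Γ v)⁻¹) := by rw [(commute_of_mem_link hl).eq]; group
  rw [this]
  exact mul_mem hm (hN.conj_mem _ (inv_mem hm) _)

theorem IsElliptic.exists_apply_pow_eq {u : V} {n : RAAG Γ} (hn : IsElliptic Γ u n) {X : Type*}
    {f : RAAG Γ →* Equiv.Perm X} {x : X} (hx : ∀ w ≠ u, f (of Γ w) x = x) :
    ∃ k > 0, ∃ y, f (n ^ k) y = y := by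
  have fixes : parabolic Γ {u}ᶜ ≤ (MulAction.stabilizer (Equiv.Perm X) x).comap f := by
    rw [parabolic, Subgroup.closure_le]
    rintro _ ⟨w, hw, rfl⟩
    exact hx w hw
  obtain ⟨k, hk, g, hg⟩ := hn
  refine ⟨k, hk, f g x, ?_⟩
  have : f (g⁻¹ * n ^ k * g) x = x := fixes hg
  rwa [mul_assoc, map_mul, map_inv, Equiv.Perm.mul_apply, Equiv.Perm.inv_eq_iff_eq, map_mul,
    Equiv.Perm.mul_apply] at this

/-- The affine group of the line detects this: let `u` act by `x ↦ x + 1` and `v` by `x ↦ 2 * x`,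
so that `⁅u ^ k, v⁆` is a nontrivial translation, while all generators other than `u` fix `0`. -/
theorem not_isElliptic_commutator {u v : V} (huv : u ≠ v) (h : ¬ Γ.Adj u v) {k : ℕ} (hk : k ≠ 0) :
    ¬ IsElliptic Γ u ⁅of Γ u ^ k, of Γ v⁆ := by
  obtain ⟨f, hfu, hfv, hf⟩ := exists_hom_of_not_adj huv h (Equiv.addRight (1 : ℚ))
    (Equiv.mulLeft₀ (2 : ℚ) two_ne_zero)
  have hfv_apply (x : ℚ) : f (of Γ v) x = 2 * x := by rw [hfv]; rfl
  have hfu_pow (x : ℚ) : f (of Γ u ^ k) x = x + k := by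
    rw [map_pow, hfu, ← Equiv.Perm.iterate_eq_pow, Equiv.coe_addRight, add_right_iterate_apply,
      nsmul_one]
  have translation (x : ℚ) : f ⁅of Γ u ^ k, of Γ v⁆ x = x - k := by
    have h_comm : ⁅of Γ u ^ k, of Γ v⁆ * (of Γ v * of Γ u ^ k) = of Γ u ^ k * of Γ v := by
      rw [commutatorElement_def]
      group
    have h_apply := DFunLike.congr_fun (congrArg f h_comm) (x / 2 - k)
    simp only [map_mul, Equiv.Perm.mul_apply, hfu_pow, hfv_apply, sub_add_cancel] at h_apply
    rw [mul_div_cancel₀ x two_ne_zero] at h_apply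
    rw [h_apply]
    ring
  have translation_pow (j : ℕ) (x : ℚ) : f (⁅of Γ u ^ k, of Γ v⁆ ^ j) x = x - j * k := by
    induction j with
    | zero => simp
    | succ j ih =>
      rw [pow_succ', map_mul, Equiv.Perm.mul_apply, ih, translation]
      push_cast
      ring
  intro hell
  obtain ⟨j, hj, y, hy⟩ := hell.exists_apply_pow_eq (f := f) (x := 0) fun w hw ↦ by
    obtain rfl | hwv := eq_or_ne w v
    · rw [hfv_apply, mul_zero]
    · rw [hf w hw hwv, Equiv.Perm.one_apply]
  rw [translation_pow, sub_eq_self] at hy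
  exact mul_ne_zero (Nat.cast_ne_zero.mpr hj.ne') (Nat.cast_ne_zero.mpr hk) hy

theorem finiteIndex_sup_link_of_not_adj {N : Subgroup (RAAG Γ)} [N.Normal] (hfg : N.FG) {u v : V}
    (huv : u ≠ v) (h : ¬ Γ.Adj u v) (hv : (N ⊔ link Γ v).FiniteIndex) :
    (N ⊔ link Γ u).FiniteIndex := by
  obtain ⟨k, hk, -, hmem⟩ :=
    Subgroup.exists_pow_mem_of_index_ne_zero hv.index_ne_zero (of Γ u)
  exact finiteIndex_sup_link_of_not_isElliptic hfg (commutator_of_mem_of_mem_sup_link hmem)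
    (not_isElliptic_commutator huv h hk.ne')

end Propagation

section Products

variable {V W : Type} {Γ : SimpleGraph V} {Δ : SimpleGraph W} {H : Type*} [Group H]

theorem mem_parabolic_univ (g : RAAG Γ) : g ∈ parabolic Γ Set.univ := by
  rw [parabolic, Set.image_univ, closure_range_of]
  exact Subgroup.mem_top g

theorem commute_map_map_of_mem_parabolic {S : Set V} {T : Set W} {f : RAAG Γ →* H}
    {f' : RAAG Δ →* H} (h : ∀ v ∈ S, ∀ w ∈ T, Commute (f (of Γ v)) (f' (of Δ w))) {x : RAAG Γ}
    {y : RAAG Δ} (hx : x ∈ parabolic Γ S) (hy : y ∈ parabolic Δ T) : Commute (f x) (f' y) :=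
  commute_map_of_mem_parabolic (fun v hv ↦
    (commute_map_of_mem_parabolic (fun w hw ↦ (h v hv w hw).symm) hy).symm) hx

/-- The join of two graphs. -/
abbrev join (Γ : SimpleGraph V) (Δ : SimpleGraph W) : SimpleGraph (V ⊕ W) :=
  (Γ ⊕g Δ) ⊔ completeBipartiteGraph V W

theorem nonempty_join_mulEquiv (Γ : SimpleGraph V) (Δ : SimpleGraph W) :
    Nonempty (RAAG (join Γ Δ) ≃* RAAG Γ × RAAG Δ) := by
  let inl : RAAG Γ →* RAAG (join Γ Δ) :=
    map ((SimpleGraph.Hom.ofLE le_sup_left).comp SimpleGraph.Embedding.sumInl.toHom)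
  let inr : RAAG Δ →* RAAG (join Γ Δ) :=
    map ((SimpleGraph.Hom.ofLE le_sup_left).comp SimpleGraph.Embedding.sumInr.toHom)
  have inl_of (v : V) : inl (of Γ v) = of _ (.inl v) := map_of _ v
  have inr_of (w : W) : inr (of Δ w) = of _ (.inr w) := map_of _ w
  have commute_inl_inr (x : RAAG Γ) (y : RAAG Δ) : Commute (inl x) (inr y) := by
    refine commute_map_map_of_mem_parabolic (fun v _ w _ ↦ ?_) (mem_parabolic_univ x)
      (mem_parabolic_univ y)
    rw [inl_of, inr_of]
    exact commute_of_of (by simp)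
  let split : RAAG (join Γ Δ) →* RAAG Γ × RAAG Δ :=
    lift (Sum.elim (fun v ↦ (of Γ v, 1)) fun w ↦ (1, of Δ w)) (by
      rintro (v | v) (w | w) h
      · exact (commute_of_of (by simpa using h)).prod (Commute.one_left 1)
      · exact (Commute.one_right _).prod (Commute.one_left _)
      · exact (Commute.one_left _).prod (Commute.one_right _)
      · exact (Commute.one_left 1).prod (commute_of_of (by simpa using h)))
  have split_inl (v : V) : split (of _ (.inl v)) = (of Γ v, 1) := lift_of _ _ (Sum.inl v)
  have split_inr (w : W) : split (of _ (.inr w)) = (1, of Δ w) := lift_of _ _ (Sum.inr w)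
  refine ⟨split.toMulEquiv (inl.noncommCoprod inr commute_inl_inr) (hom_ext ?_) ?_⟩
  · rintro (v | w)
    · simp [split_inl, inl_of]
    · simp [split_inr, inr_of]
  · have h_inl : split.comp inl = MonoidHom.inl _ _ := hom_ext fun v ↦
      (congrArg split (inl_of v)).trans (split_inl v)
    have h_inr : split.comp inr = MonoidHom.inr _ _ := hom_ext fun w ↦
      (congrArg split (inr_of w)).trans (split_inr w)
    ext ⟨x, y⟩ : 1
    have hx : split (inl x) = (x, 1) := DFunLike.congr_fun h_inl x
    have hy : split (inr y) = (1, y) := DFunLike.congr_fun h_inr y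
    calc split (inl x * inr y) = (x, 1) * (1, y) := by rw [map_mul, hx, hy]
      _ = (x, y) := Prod.ext (mul_one x) (one_mul y)

theorem subsingleton_of_isEmpty [IsEmpty V] : Subsingleton (RAAG Γ) := by
  suffices MonoidHom.id (RAAG Γ) = 1 from
    ⟨fun x y ↦ (DFunLike.congr_fun this x).trans (DFunLike.congr_fun this y).symm⟩
  exact hom_ext isEmptyElim

theorem nonempty_top_mulEquiv (J : Type) [Finite J] :
    Nonempty (RAAG (⊤ : SimpleGraph J) ≃* (J → Multiplicative ℤ)) := by
  classical
  have := Fintype.ofFinite J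
  let toPi : RAAG (⊤ : SimpleGraph J) →* (J → Multiplicative ℤ) :=
    lift (fun j ↦ Pi.mulSingle j (.ofAdd 1)) fun _ _ _ ↦ Commute.all _ _
  have toPi_of (j : J) : toPi (of _ j) = Pi.mulSingle j (.ofAdd 1) := lift_of _ _ j
  let ofPi : (J → Multiplicative ℤ) →* RAAG (⊤ : SimpleGraph J) :=
    MonoidHom.noncommPiCoprod (fun j ↦ zpowersHom _ (of ⊤ j)) fun _ _ h _ _ ↦
      (commute_of_of h).zpow_zpow _ _
  have ofPi_mulSingle (j : J) : ofPi (Pi.mulSingle j (.ofAdd 1)) = of ⊤ j :=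
    (MonoidHom.noncommPiCoprod_mulSingle _ j _).trans <| by
      rw [zpowersHom_apply, toAdd_ofAdd, zpow_one]
  refine ⟨toPi.toMulEquiv ofPi (hom_ext fun j ↦ ?_) (MonoidHom.functions_ext' _ _ _ fun j ↦
    MonoidHom.ext_mint ?_)⟩
  · exact (congrArg ofPi (toPi_of j)).trans (ofPi_mulSingle j)
  · exact (congrArg toPi (ofPi_mulSingle j)).trans (toPi_of j)

end Products

end RAAG

theorem nonempty_prod_mulEquiv_of_leftInverse {Q A : Type*} [Group Q] [Group A] {r : Q →* A}
    {s : A →* Q} (hrs : Function.LeftInverse r s) {P : Subgroup Q} (hP : P ≤ r.ker)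
    (hcomm : ∀ a, ∀ p ∈ P, Commute (s a) p) (hsup : s.range ⊔ P = ⊤) : Nonempty (A × P ≃* Q) := by
  refine ⟨MulEquiv.ofBijective (s.noncommCoprod P.subtype fun a p ↦ hcomm a p p.2) ⟨?_, ?_⟩⟩
  · rw [injective_iff_map_eq_one]
    rintro ⟨a, p⟩ (hap : s a * p = 1)
    have ha : a = 1 := by
      have := congrArg r hap
      rwa [map_mul, hrs a, hP p.2, mul_one, map_one] at this
    rw [ha, map_one, one_mul] at hap
    exact Prod.ext ha (Subtype.ext hap)
  · refine MonoidHom.range_eq_top.mp ((MonoidHom.noncommCoprod_range _ _ _).trans ?_)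
    rw [P.range_subtype, hsup]

/-- The group `Q` has a subgroup of finite index which is the right-angled Artin group of a finite
graph. -/
def IsVirtuallyRAAG (Q : Type*) [Group Q] : Prop :=
  ∃ (W : Type) (_ : Fintype W) (Δ : SimpleGraph W) (H : Subgroup Q),
    H.FiniteIndex ∧ Nonempty (H ≃* RAAG Δ)

namespace IsVirtuallyRAAG

variable {Q Q' : Type*} [Group Q] [Group Q']

theorem of_injective {f : Q →* Q'} (hf : Function.Injective f) [hr : f.range.FiniteIndex]
    (h : IsVirtuallyRAAG Q) : IsVirtuallyRAAG Q' := by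
  obtain ⟨W, hW, Δ, H, hH, ⟨e⟩⟩ := h
  refine ⟨W, hW, Δ, H.map f, ⟨?_⟩, ⟨(H.equivMapOfInjective f hf).symm.trans e⟩⟩
  rw [Subgroup.index_map_of_injective H hf]
  exact mul_ne_zero hH.index_ne_zero hr.index_ne_zero

theorem of_mulEquiv (e : Q ≃* Q') (h : IsVirtuallyRAAG Q) : IsVirtuallyRAAG Q' := by
  have : e.toMonoidHom.range.FiniteIndex := by
    rw [MonoidHom.range_eq_top.mpr e.surjective]
    infer_instance
  exact h.of_injective (f := e.toMonoidHom) e.injective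

theorem of_subgroup {H : Subgroup Q} [hH : H.FiniteIndex] (h : IsVirtuallyRAAG H) :
    IsVirtuallyRAAG Q :=
  h.of_injective H.subtype_injective (hr := H.range_subtype.symm ▸ hH)

theorem raag {V : Type} [Finite V] (Γ : SimpleGraph V) : IsVirtuallyRAAG (RAAG Γ) :=
  ⟨V, Fintype.ofFinite V, Γ, ⊤, inferInstance, ⟨Subgroup.topEquiv⟩⟩

theorem prod (h : IsVirtuallyRAAG Q) (h' : IsVirtuallyRAAG Q') : IsVirtuallyRAAG (Q × Q') := by
  obtain ⟨V, _, Γ, H, _, ⟨e⟩⟩ := h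
  obtain ⟨W, _, Δ, H', _, ⟨e'⟩⟩ := h'
  obtain ⟨eJoin⟩ := RAAG.nonempty_join_mulEquiv Γ Δ
  have : (H.prod H').FiniteIndex := ⟨by
    rw [Subgroup.index_prod]
    exact mul_ne_zero Subgroup.FiniteIndex.index_ne_zero Subgroup.FiniteIndex.index_ne_zero⟩
  exact ⟨V ⊕ W, inferInstance, _, H.prod H', this,
    ⟨(H.prodEquiv H').trans ((e.prodCongr e').trans eJoin.symm)⟩⟩

theorem of_finite [Finite Q] : IsVirtuallyRAAG Q :=
  have : Subsingleton (RAAG (⊥ : SimpleGraph Empty)) := RAAG.subsingleton_of_isEmpty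
  (raag (⊥ : SimpleGraph Empty)).of_injective (f := 1) (Function.injective_of_subsingleton _)

theorem pi_int (J : Type) [Finite J] : IsVirtuallyRAAG (J → Multiplicative ℤ) :=
  have ⟨e⟩ := RAAG.nonempty_top_mulEquiv J
  (raag ⊤).of_mulEquiv e

theorem of_commGroup (A : Type*) [CommGroup A] [Group.FG A] : IsVirtuallyRAAG A := by
  obtain ⟨ι, J, _, _, p, hp, k, ⟨e⟩⟩ := CommGroup.equiv_free_prod_prod_multiplicative_zmod A
  have (i : ι) : NeZero (p i ^ k i) := ⟨pow_ne_zero _ (hp i).ne_zero⟩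
  have (i : ι) : Finite (Multiplicative (ZMod (p i ^ k i))) :=
    inferInstanceAs (Finite (ZMod (p i ^ k i)))
  exact ((pi_int J).prod of_finite).of_mulEquiv e.symm

theorem of_finiteIndex_center [Group.FG Q] [(Subgroup.center Q).FiniteIndex] :
    IsVirtuallyRAAG Q := by
  open scoped IsMulCommutative in
  exact (of_commGroup (Subgroup.center Q)).of_subgroup

theorem closure {S : Set Q} (hS : S.Finite)
    (h : ∀ s ∈ S, (Subgroup.centralizer {s}).FiniteIndex) :
    IsVirtuallyRAAG (Subgroup.closure S) := by
  have : Group.FG (Subgroup.closure S) := (Group.fg_iff_subgroup_fg _).mpr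
    ((Subgroup.fg_iff _).mpr ⟨S, rfl, hS⟩)
  have : (Subgroup.centralizer (Subgroup.closure S : Set Q)).FiniteIndex := by
    rw [Subgroup.centralizer_closure, Subgroup.centralizer_eq_iInf, ← hS.coe_toFinset]
    exact Subgroup.finiteIndex_iInf' _ fun s hs ↦ h s (hS.mem_toFinset.mp hs)
  have : (Subgroup.center (Subgroup.closure S)).FiniteIndex :=
    Subgroup.finiteIndex_of_le
      (H := (Subgroup.centralizer (Subgroup.closure S : Set Q)).subgroupOf _) fun c hc ↦
        Subgroup.mem_center_iff.mpr fun g ↦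
          Subtype.ext (Subgroup.mem_centralizer_iff.mp (Subgroup.mem_subgroupOf.mp hc) g g.2)
  exact of_finiteIndex_center

end IsVirtuallyRAAG

namespace RAAG

section Quotient

variable {V : Type} {Γ : SimpleGraph V} {N : Subgroup (RAAG Γ)} [N.Normal]

theorem range_incl_sup_parabolic_compl (S : Set V) :
    (incl Γ S).range ⊔ parabolic Γ Sᶜ = ⊤ := by
  rw [eq_top_iff, ← closure_range_of, Subgroup.closure_le]
  rintro _ ⟨v, rfl⟩
  by_cases hv : v ∈ S
  · exact Subgroup.mem_sup_left ⟨of _ ⟨v, hv⟩, incl_of _⟩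
  · exact Subgroup.mem_sup_right (of_mem_parabolic hv)

theorem parabolic_compl_le_ker_proj (S : Set V) : parabolic Γ Sᶜ ≤ (proj Γ S).ker := by
  rw [parabolic, Subgroup.closure_le]
  rintro _ ⟨v, hv, rfl⟩
  exact proj_of_notMem hv

theorem nonempty_prod_mulEquiv_quotient {S : Set V} (hS : ∀ v ∈ S, ∀ w ∉ S, Γ.Adj v w)
    (hN : N ≤ (proj Γ S).ker) :
    Nonempty (RAAG (Γ.induce S) × (parabolic Γ Sᶜ).map (QuotientGroup.mk' N) ≃* RAAG Γ ⧸ N) := by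
  refine nonempty_prod_mulEquiv_of_leftInverse (r := QuotientGroup.lift N (proj Γ S) hN)
    (s := (QuotientGroup.mk' N).comp (incl Γ S)) proj_incl ?_ ?_ ?_
  · exact Subgroup.map_le_iff_le_comap.mpr (parabolic_compl_le_ker_proj S)
  · rintro g _ ⟨h, hh, rfl⟩
    refine commute_map_map_of_mem_parabolic (fun v _ w hw ↦ ?_) (mem_parabolic_univ g) hh
    rw [MonoidHom.comp_apply, incl_of]
    exact (commute_of_of (hS v v.2 w hw)).map _
  · rw [← MonoidHom.map_range, ← Subgroup.map_sup, range_incl_sup_parabolic_compl,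
      ← MonoidHom.range_eq_map, QuotientGroup.range_mk']

theorem finiteIndex_centralizer_mk_of {v : V} [(N ⊔ link Γ v).FiniteIndex] :
    (Subgroup.centralizer {QuotientGroup.mk' N (of Γ v)}).FiniteIndex := by
  have h_le : N ⊔ link Γ v ≤
      (Subgroup.centralizer {QuotientGroup.mk' N (of Γ v)}).comap (QuotientGroup.mk' N) :=
    fun g hg ↦ Subgroup.mem_centralizer_singleton_iff.mpr <| by
      rw [← commutatorElement_eq_one_iff_mul_comm, ← map_commutatorElement]
      exact (QuotientGroup.eq_one_iff _).mpr (commutator_of_mem_of_mem_sup_link hg)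
  have := (Subgroup.finiteIndex_of_le h_le).index_ne_zero
  rw [Subgroup.index_comap_of_surjective _ (QuotientGroup.mk'_surjective N)] at this
  exact ⟨this⟩

theorem le_ker_proj_of_not_finiteIndex (hfg : N.FG) {S : Set V} (hS : S.Finite)
    (h : ∀ v ∈ S, ¬ (N ⊔ link Γ v).FiniteIndex) : N ≤ (proj Γ S).ker := fun n hn ↦
  retract_eq_one_iff.mp <| retract_eq_one_of_isElliptic hS fun v hv ↦ by
    contrapose! h
    exact ⟨v, hv, finiteIndex_sup_link_of_not_isElliptic hfg hn h⟩

end Quotient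

end RAAG

theorem quotient_of_RAAG_by_fg_normal_subgroup_is_virtually_RAAG
    {V : Type} [Fintype V] (Γ : SimpleGraph V)
    (N : Subgroup (RAAG Γ)) [N.Normal] (hfg : N.FG) :
    ∃ (W : Type) (_ : Fintype W) (Δ : SimpleGraph W) (H : Subgroup (RAAG Γ ⧸ N)),
      H.FiniteIndex ∧ Nonempty (↥H ≃* RAAG Δ) := by
  let A : Set V := {v | ¬ (N ⊔ RAAG.link Γ v).FiniteIndex}
  have adj_of_mem_of_notMem (v) (hv : v ∈ A) (w) (hw : w ∉ A) : Γ.Adj v w := by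
    by_contra h
    exact hv <| RAAG.finiteIndex_sup_link_of_not_adj hfg (ne_of_mem_of_not_mem hv hw) h
      (not_not.mp hw)
  have N_le_ker : N ≤ (RAAG.proj Γ A).ker :=
    RAAG.le_ker_proj_of_not_finiteIndex hfg A.toFinite fun _ hv ↦ hv
  have virtually_parabolic : IsVirtuallyRAAG ((RAAG.parabolic Γ Aᶜ).map (QuotientGroup.mk' N)) := by
    rw [RAAG.parabolic, MonoidHom.map_closure]
    refine .closure (Set.toFinite _) ?_
    rintro _ ⟨_, ⟨v, hv, rfl⟩, rfl⟩
    have : (N ⊔ RAAG.link Γ v).FiniteIndex := not_not.mp hv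
    exact RAAG.finiteIndex_centralizer_mk_of
  obtain ⟨e⟩ := RAAG.nonempty_prod_mulEquiv_quotient adj_of_mem_of_notMem N_le_ker
  exact ((IsVirtuallyRAAG.raag (Γ.induce A)).prod virtually_parabolic).of_mulEquiv e
end
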